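/- Let n > 1 be an odd integer. There exist infinitely many pairwise non-isomorphic number fields K with the following properties: there is a positive integer y with y ≡ 19 (mod 36), y not divisible by 5, and y not divisible by 7, such that the polynomial x⁶ + 3x⁵ + ((yⁿ−127)/36)x⁴ + ((yⁿ−217)/18)x³ + ((yⁿ−127)/36)x² + 3x + 1 is irreducible over ℚ and K is its splitting field; K is a totally imaginary Galois extension of ℚ of degree 6 with Galois group isomorphic to the symmetric group S₃; and rank_n Cl(K) ≥ 5. -/

import Mathlib

open Polynomial NumberField

/-- `M` contains a subgroup isomorphic to `(ℤ/nℤ)^s`, i.e. `rank_n M ≥ s`. -/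
def HasZModRankGE (M : Type*) [CommGroup M] (n s : ℕ) : Prop :=
  ∃ φ : (Multiplicative (Fin s → ZMod n)) →* M, Function.Injective φ

/-- A number field (here a subfield of `ℂ`) is totally imaginary if none of its complex
embeddings takes only real values. -/
def TotallyImaginary (K : Type*) [Field K] : Prop :=
  ∀ φ : K →+* ℂ, ∃ x : K, (φ x).im ≠ 0


open ArithmeticFunction ArithmeticFunction.vonMangoldt Filter Topology in
lemma not_summable_prime_ap (q : ℕ) [NeZero q] (a : ZMod q) (ha : IsUnit a) :
    ¬ Summable fun n : ℕ ↦ (if n.Prime ∧ (n : ZMod q) = a then (1 / (n : ℝ)) else 0) := by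
  intro H
  have Hb := (summable_residueClass_non_primes_div a).add H
  obtain ⟨C, hC⟩ := LSeries_residueClass_lower_bound ha
  have key : Tendsto (fun x : ℝ ↦ ∑' n : ℕ, (x - 1) * (residueClass a n / (n : ℝ) ^ x))
      (𝓝[>] 1) (𝓝 (∑' n : ℕ, (0 : ℝ))) := by
    refine tendsto_tsum_of_dominated_convergence Hb ?_ ?_
    · intro n
      rcases n.eq_zero_or_pos with rfl | hn
      · simp
      have : ContinuousAt (fun x : ℝ ↦ (x - 1) * (residueClass a n / (n : ℝ) ^ x)) 1 := by
        have : (n : ℝ) ≠ 0 := by positivity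
        refine ContinuousAt.mul (by fun_prop) (ContinuousAt.div (by fun_prop) ?_ (by positivity))
        exact Real.continuousAt_const_rpow this
      have := this.tendsto
      simp only [sub_self, zero_mul] at this
      exact this.mono_left nhdsWithin_le_nhds
    · have h2 : ∀ᶠ x : ℝ in 𝓝[>] 1, x ∈ Set.Ioo (1 : ℝ) 2 := Ioo_mem_nhdsGT (by norm_num)
      filter_upwards [h2] with x hx n
      rcases n.eq_zero_or_pos with rfl | hn
      · simp
      have hn' : (0 : ℝ) < n := by positivity
      have hn1 : (1 : ℝ) ≤ n := by exact_mod_cast hn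
      have hx1 : 0 < x - 1 := by linarith [hx.1]
      have hr := residueClass_nonneg a n
      rw [Real.norm_of_nonneg (by positivity)]
      have hsplit : (n : ℝ) ^ x = n * (n : ℝ) ^ (x - 1) := by
        rw [Real.rpow_sub_one hn'.ne']; field_simp
      have hge1 : 1 ≤ (n : ℝ) ^ (x - 1) := Real.one_le_rpow hn1 hx1.le
      by_cases hp : n.Prime
      · simp only [hp, if_true, true_and]
        by_cases hna : (n : ZMod q) = a
        · have : residueClass a n = Real.log n := by
            simp [residueClass, hna, vonMangoldt_apply_prime hp]
          rw [this, hsplit]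
          simp only [hna, if_true]
          have hlog : (x - 1) * Real.log n ≤ (n : ℝ) ^ (x - 1) := by
            have := Real.add_one_le_exp ((x - 1) * Real.log n)
            rw [Real.rpow_def_of_pos hn', mul_comm (Real.log _)]
            linarith
          rw [zero_div, zero_add, mul_div_assoc', div_le_div_iff₀ (by positivity) hn']
          nlinarith
        · have : residueClass a n = 0 := by
            simp [residueClass, hna]
          simp [hna]
      · simp only [hp, if_false, false_and, add_zero]
        rw [hsplit, mul_div_assoc', div_le_div_iff₀ (by positivity) hn']
        have : (x - 1) * residueClass a n * n ≤ 1 * residueClass a n * n := by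
          gcongr; linarith [hx.2]
        have h3 : residueClass a n * n * 1 ≤ residueClass a n * n * (n : ℝ) ^ (x - 1) := by
          gcongr
        nlinarith
  rw [tsum_zero] at key
  have hlow : Tendsto (fun x : ℝ ↦ (q.totient : ℝ)⁻¹ - C * (x - 1)) (𝓝[>] 1)
      (𝓝 ((q.totient : ℝ)⁻¹ - C * (1 - 1))) := by
    have : ContinuousAt (fun x : ℝ ↦ (q.totient : ℝ)⁻¹ - C * (x - 1)) 1 := by fun_prop
    exact this.tendsto.mono_left nhdsWithin_le_nhds
  have := le_of_tendsto_of_tendsto hlow key (by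
    have h2 : ∀ᶠ x : ℝ in 𝓝[>] 1, x ∈ Set.Ioo (1 : ℝ) 2 := Ioo_mem_nhdsGT (by norm_num)
    filter_upwards [h2] with x hx
    have h1 := hC (x := x) ⟨hx.1, hx.2.le⟩
    have hx1 : 0 < x - 1 := by linarith [hx.1]
    rw [tsum_mul_left]
    have h3 := mul_le_mul_of_nonneg_left h1 hx1.le
    refine le_trans (le_of_eq ?_) h3
    field_simp)
  have hq : 0 < (q.totient : ℝ)⁻¹ := inv_pos.mpr (mod_cast q.totient.pos_of_neZero)
  linarith

lemma padic_toZMod_eq_zero_iff {l : ℕ} [Fact l.Prime] (z : ℤ_[l]) :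
    PadicInt.toZMod z = 0 ↔ ‖z‖ < 1 := by
  rw [← RingHom.mem_ker, PadicInt.ker_toZMod, IsLocalRing.mem_maximalIdeal, PadicInt.mem_nonunits]

lemma padic_hensel {l : ℕ} [Fact l.Prime] (F : ℤ[X]) (r : ZMod l)
    (h0 : aeval r F = 0) (h1 : aeval r (derivative F) ≠ 0) :
    ∃ z : ℤ_[l], aeval z F = 0 ∧ PadicInt.toZMod z = r := by
  obtain ⟨a, ha⟩ : ∃ a : ℤ_[l], PadicInt.toZMod a = r :=
    ⟨(r.val : ℤ_[l]), by simp⟩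
  have hmap (G : ℤ[X]) : PadicInt.toZMod (aeval a G) = aeval r G := by
    rw [aeval_def, Polynomial.hom_eval₂, ha, aeval_def]
    congr 1
    exact RingHom.ext_int _ _
  have hd : ‖aeval a (derivative F)‖ = 1 := by
    by_contra h
    apply h1
    rw [← hmap, padic_toZMod_eq_zero_iff]
    exact lt_of_le_of_ne (PadicInt.norm_le_one _) h
  have hn : ‖aeval a F‖ < ‖aeval a (derivative F)‖ ^ 2 := by
    rw [hd, one_pow, ← padic_toZMod_eq_zero_iff, hmap, h0]
  obtain ⟨z, hz, hza, -⟩ := hensels_lemma hn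
  refine ⟨z, hz, ?_⟩
  rw [hd, ← padic_toZMod_eq_zero_iff, map_sub, sub_eq_zero, ha] at hza
  exact hza

/-- restriction of a `p`-adic embedding to integers. -/
noncomputable def intPadicHom {K : Type*} [Field K] [NumberField K] {l : ℕ} [Fact l.Prime]
    (φ : K →+* ℚ_[l]) : 𝓞 K →+* ℤ_[l] :=
  (φ.comp (algebraMap (𝓞 K) K)).codRestrict (PadicInt.subring l) (fun x => by
    have hx : IsIntegral ℤ (φ (x : K)) := (x.2 : IsIntegral ℤ (x : K)).map φ.toIntAlgHom
    have hx' : IsIntegral ℤ_[l] (φ (x : K)) := hx.tower_top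
    obtain ⟨y, hy⟩ := IsIntegrallyClosed.isIntegral_iff.mp hx'
    change ‖φ (x : K)‖ ≤ 1
    rw [← hy]
    exact y.2)

lemma intPadicHom_coe {K : Type*} [Field K] [NumberField K] {l : ℕ} [Fact l.Prime]
    (φ : K →+* ℚ_[l]) (x : 𝓞 K) : ((intPadicHom φ x : ℤ_[l]) : ℚ_[l]) = φ (x : K) := rfl

/-- residue ring hom -/
noncomputable def resHom {K : Type*} [Field K] [NumberField K] {l : ℕ} [Fact l.Prime]
    (φ : K →+* ℚ_[l]) : 𝓞 K →+* ZMod l := PadicInt.toZMod.comp (intPadicHom φ)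

lemma absNorm_ker_zmod {K : Type*} [Field K] [NumberField K] {l : ℕ} [Fact l.Prime]
    (φ : 𝓞 K →+* ZMod l) : Ideal.absNorm (RingHom.ker φ) = l := by
  have hs : Function.Surjective φ := ZMod.ringHom_surjective φ
  rw [Ideal.absNorm_apply, Submodule.cardQuot_apply,
    Nat.card_congr (RingHom.quotientKerEquivOfSurjective hs).toEquiv, Nat.card_zmod]

lemma count_summable (L : Type*) [Field L] [NumberField L] (M : ℕ) (hM : 0 < M)
    (P Q : ℕ → Ideal (𝓞 L)) (S : Set ℕ)
    (hP : ∀ l : ℕ, l.Prime → ¬ l ∣ M → (P l).IsPrime ∧ Ideal.absNorm (P l) = l)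
    (hQ : ∀ l ∈ S, l.Prime ∧ ¬ l ∣ M ∧ (Q l).IsPrime ∧ Ideal.absNorm (Q l) = l ∧ Q l ≠ P l) :
    Summable (S.indicator (fun n : ℕ => 1 / (n : ℝ))) := by
  classical
  let J : ℕ → Ideal (𝓞 L) := fun k => (k.primeFactorsList.map P).prod
  have hJ : ∀ k : ℕ, k ≠ 0 → (∀ l : ℕ, l.Prime → l ∣ k → ¬ l ∣ M) → Ideal.absNorm (J k) = k := by
    intro k hk h
    have h2 : (k.primeFactorsList.map P).map Ideal.absNorm = k.primeFactorsList := by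
      rw [List.map_map]
      conv_rhs => rw [← List.map_id k.primeFactorsList]
      apply List.map_congr_left
      intro l hl
      exact (hP l (Nat.prime_of_mem_primeFactorsList hl)
        (h l (Nat.prime_of_mem_primeFactorsList hl) (Nat.dvd_of_mem_primeFactorsList hl))).2
    simp only [J]
    rw [map_list_prod, h2, Nat.prod_primeFactorsList hk]
  have hdist : ∀ (l l' : ℕ), l ∈ S → l'.Prime → ¬ l' ∣ M → ¬ Q l ∣ P l' := by
    intro l l' hl hl' hM' hd
    obtain ⟨h1, h2, h3, h4, h5⟩ := hQ l hl
    have h6 := hP l' hl' hM'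
    have hll : l ∣ l' := by
      have := map_dvd (Ideal.absNorm (S := 𝓞 L)) hd
      rwa [h4, h6.2] at this
    obtain rfl := (Nat.prime_dvd_prime_iff_eq h1 hl').mp hll
    apply h5
    have hle := Ideal.dvd_iff_le.mp hd
    have hmax : (P l).IsMaximal := by
      refine Ideal.IsPrime.isMaximal h6.1 ?_
      rintro h0
      rw [h0, Ideal.absNorm_bot] at h6
      exact hl'.ne_zero h6.2.symm
    exact (hmax.eq_of_le h3.ne_top hle).symm
  have hcop : ∀ j l : ℕ, l.Prime → l ∣ 1 + M * j → ¬ l ∣ M := by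
    intro j l hl h1 h2
    have := (Nat.dvd_add_left (Dvd.dvd.mul_right h2 j)).mp h1
    exact hl.one_lt.ne' (Nat.dvd_one.mp this)
  -- injectivity
  have hinj : ∀ l ∈ S, ∀ l' ∈ S, ∀ j j' : ℕ, J (1 + M * j) * Q l = J (1 + M * j') * Q l' →
      l = l' ∧ j = j' := by
    intro l hl l' hl' j j' h
    obtain ⟨h1, h2, h3, h4, h5⟩ := hQ l hl
    obtain ⟨h1', h2', h3', h4', h5'⟩ := hQ l' hl'
    have hQ0 : Q l ≠ ⊥ := by
      intro h0; rw [h0, Ideal.absNorm_bot] at h4; exact h1.ne_zero h4.symm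
    have hQp : Prime (Q l) := Ideal.prime_of_isPrime hQ0 h3
    have hd : Q l ∣ J (1 + M * j') * Q l' := h ▸ Dvd.intro_left _ rfl
    have hll : l = l' := by
      rcases hQp.dvd_or_dvd hd with hd | hd
      · exfalso
        obtain ⟨I, hI, hdI⟩ := (Prime.dvd_prod_iff hQp).mp hd
        obtain ⟨l'', hl'', rfl⟩ := List.mem_map.mp hI
        exact hdist l l'' hl (Nat.prime_of_mem_primeFactorsList hl'')
          (hcop j' l'' (Nat.prime_of_mem_primeFactorsList hl'')
            (Nat.dvd_of_mem_primeFactorsList hl'')) hdI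
      · have := map_dvd (Ideal.absNorm (S := 𝓞 L)) hd
        rw [h4, h4'] at this
        exact (Nat.prime_dvd_prime_iff_eq h1 h1').mp this
    refine ⟨hll, ?_⟩
    have := congrArg Ideal.absNorm h
    rw [map_mul, map_mul, hJ _ (by omega) (hcop j), hJ _ (by omega) (hcop j'), h4, h4', hll] at this
    have := Nat.eq_of_mul_eq_mul_right h1'.pos this
    have h9 : M * j = M * j' := by omega
    exact Nat.eq_of_mul_eq_mul_left hM h9
  have hlim := NumberField.Ideal.tendsto_norm_le_div_atTop L
  set κ := (2 ^ InfinitePlace.nrRealPlaces L * (2 * Real.pi) ^ InfinitePlace.nrComplexPlaces L *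
    Units.regulator L * classNumber L) / (Units.torsionOrder L * Real.sqrt |discr L|) with hκ
  have hev := (hlim.eventually_le_const (lt_add_one κ))
  obtain ⟨s0, hs0⟩ := Filter.eventually_atTop.mp hev
  refine summable_of_sum_le (c := M * (κ + 1)) (fun n => Set.indicator_nonneg (fun _ _ => by positivity) n) ?_
  intro T0
  set T := T0.filter (· ∈ S) with hT
  have hTS : ∀ l ∈ T, l ∈ S := fun l hl => (Finset.mem_filter.mp hl).2
  have hsum : ∑ x ∈ T0, S.indicator (fun n : ℕ => 1 / (n : ℝ)) x = ∑ x ∈ T, 1 / (x : ℝ) := by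
    rw [hT, Finset.sum_filter]; rfl
  rw [hsum]
  set R := ∏ l ∈ T, l with hRR
  have hRpos : 0 < R := Finset.prod_pos fun l hl => (hQ l (hTS l hl)).1.pos
  obtain ⟨t, ht⟩ := exists_nat_gt (max s0 1)
  have ht0 : 0 < t := by
    have : (0 : ℝ) < t := lt_of_lt_of_le (by norm_num) ((le_max_right s0 1).trans ht.le)
    exact_mod_cast this
  set s : ℕ := M * R * t with hs
  have hspos : 0 < s := by positivity
  have hss : s0 ≤ (s : ℝ) := by
    have h1 : t ≤ s := Nat.le_mul_of_pos_left t (by positivity)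
    have h2 : (t : ℝ) ≤ s := by exact_mod_cast h1
    linarith [le_max_left s0 1]
  have hcard := hs0 s hss
  rw [div_le_iff₀ (by exact_mod_cast hspos)] at hcard
  let c : ℕ → ℕ := fun l => (R / l) * t
  have hc : ∀ l ∈ T, c l * l * M = s := by
    intro l hl
    have : R / l * l = R := Nat.div_mul_cancel (Finset.dvd_prod_of_mem _ hl)
    calc c l * l * M = (R / l * l) * t * M := by simp only [c]; ring
      _ = s := by rw [this, hs]; ring
  let U : Finset (Σ _ : ℕ, ℕ) := T.sigma (fun l => Finset.range (c l))
  let g : (Σ _ : ℕ, ℕ) → Ideal (𝓞 L) := fun x => J (1 + M * x.2) * Q x.1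
  have hgi : Set.InjOn g U := by
    rintro ⟨l, j⟩ h ⟨l', j'⟩ h' hg
    simp only [U, Finset.coe_sigma, Set.mem_sigma_iff, Finset.mem_coe] at h h'
    obtain ⟨rfl, rfl⟩ := hinj l (hTS _ h.1) l' (hTS _ h'.1) j j' hg
    rfl
  have hfin : {I : Ideal (𝓞 L) | (Ideal.absNorm I : ℝ) ≤ (s : ℝ)}.Finite := by
    have := Ideal.finite_setOfPred_absNorm_le (S := 𝓞 L) s
    refine this.subset ?_
    intro I hI
    have hI' : (Ideal.absNorm I : ℝ) ≤ (s : ℝ) := hI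
    exact_mod_cast hI'
  have hle : U.card ≤ Nat.card {I : Ideal (𝓞 L) // (Ideal.absNorm I : ℝ) ≤ (s : ℝ)} := by
    rw [← Finset.card_image_of_injOn hgi, ← Set.ncard_coe_finset]
    change _ ≤ Nat.card {I : Ideal (𝓞 L) | (Ideal.absNorm I : ℝ) ≤ (s : ℝ)}
    rw [Nat.card_coe_set_eq]
    apply Set.ncard_le_ncard _ hfin
    intro I hI
    simp only [Finset.coe_image, Set.mem_image, Finset.mem_coe] at hI
    obtain ⟨⟨l, j⟩, h, rfl⟩ := hI
    simp only [U, Finset.mem_sigma, Finset.mem_range] at h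
    change (Ideal.absNorm (J (1 + M * j) * Q l) : ℝ) ≤ s
    rw [map_mul, hJ _ (by omega) (hcop j), (hQ l (hTS _ h.1)).2.2.2.1]
    have h1 : (1 + M * j) * l ≤ s := by
      rw [← hc l h.1]
      have : 1 + M * j ≤ c l * M := by nlinarith
      calc (1 + M * j) * l ≤ (c l * M) * l := Nat.mul_le_mul_right _ this
        _ = _ := by ring
    exact_mod_cast h1
  have hUc : (U.card : ℝ) = ∑ l ∈ T, (c l : ℝ) := by
    simp [U]
  have h10 : ∑ l ∈ T, (c l : ℝ) = s / M * ∑ l ∈ T, 1 / (l : ℝ) := by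
    rw [Finset.mul_sum]
    apply Finset.sum_congr rfl
    intro l hl
    have h1 : (c l : ℝ) * l * M = s := by exact_mod_cast hc l hl
    have h2 : (l : ℝ) ≠ 0 := by exact_mod_cast (hQ l (hTS l hl)).1.ne_zero
    have h3 : (M : ℝ) ≠ 0 := by positivity
    rw [← h1]; field_simp
  have h11 : (U.card : ℝ) ≤ (κ + 1) * s := le_trans (by exact_mod_cast hle) hcard
  rw [hUc, h10] at h11
  have hs' : (0 : ℝ) < s := by exact_mod_cast hspos
  have hM' : (0 : ℝ) < M := by exact_mod_cast hM
  have h12 : (s : ℝ) * ∑ l ∈ T, 1 / (l : ℝ) ≤ s * (M * (κ + 1)) := by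
    rw [div_mul_eq_mul_div, div_le_iff₀ hM'] at h11
    nlinarith
  exact le_of_mul_le_mul_left h12 hs'

lemma exists_prime_nonresidue (p : ℕ) (hp : p.Prime) (m : ℕ) (hm0 : 0 < m)
    (hm : ∀ b : ℚ, b ^ p ≠ (m : ℚ)) (B : ℕ) :
    ∃ l > B, l.Prime ∧ ¬ ∃ x : ZMod l, x ^ p = (m : ZMod l) := by
  by_contra hcon
  push Not at hcon
  have hirr : Irreducible (X ^ p - C (m : ℚ) : ℚ[X]) := X_pow_sub_C_irreducible_of_prime hp hm
  have hF : Fact (Irreducible (X ^ p - C (m : ℚ) : ℚ[X])) := ⟨hirr⟩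
  let L := AdjoinRoot (X ^ p - C (m : ℚ) : ℚ[X])
  have hmon : (X ^ p - C (m : ℚ) : ℚ[X]).Monic := monic_X_pow_sub_C _ hp.ne_zero
  have : Module.Finite ℚ L := hmon.finite_adjoinRoot
  have : CharZero L := charZero_of_injective_algebraMap (algebraMap ℚ L).injective
  have hNF : NumberField L := ⟨⟩
  let θ : L := AdjoinRoot.root _
  have hθ : θ ^ p = (m : L) := by
    have := AdjoinRoot.eval₂_root (X ^ p - C (m : ℚ) : ℚ[X])
    simp only [eval₂_sub, eval₂_X_pow, eval₂_C, sub_eq_zero] at this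
    exact this.trans (map_natCast (AdjoinRoot.of (X ^ p - C (m : ℚ) : ℚ[X])) m)
  have hIntegral : IsIntegral ℤ θ := by
    refine ⟨X ^ p - C (m : ℤ), monic_X_pow_sub_C _ hp.ne_zero, ?_⟩
    simp [hθ]
  let t : 𝓞 L := ⟨θ, hIntegral⟩
  let M := p * m * B.factorial
  have hM : 0 < M := by
    have := hp.pos
    have := B.factorial_pos
    positivity
  have hB : ∀ l : ℕ, l.Prime → ¬ l ∣ M → B < l := by
    intro l hl h
    by_contra hlB
    exact h (Dvd.dvd.mul_left ((hl.dvd_factorial).mpr (not_lt.mp hlB)) _)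
  have hhom : ∀ l : ℕ, l.Prime → ¬ l ∣ M → ∀ x : ZMod l, x ^ p = m →
      ∃ f : 𝓞 L →+* ZMod l, f t = x := by
    intro l hl hlM x hx
    have : Fact l.Prime := ⟨hl⟩
    have hm1 : (m : ZMod l) ≠ 0 := by
      intro h
      rw [ZMod.natCast_eq_zero_iff] at h
      exact hlM (Dvd.dvd.mul_right (Dvd.dvd.mul_left h _) _)
    have hp1 : (p : ZMod l) ≠ 0 := by
      intro h
      rw [ZMod.natCast_eq_zero_iff] at h
      exact hlM (Dvd.dvd.mul_right (Dvd.dvd.mul_right h _) _)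
    have hx0 : x ≠ 0 := by
      rintro rfl
      rw [zero_pow hp.ne_zero] at hx
      exact hm1 hx.symm
    obtain ⟨z, hz, hzx⟩ := padic_hensel (X ^ p - C (m : ℤ) : ℤ[X]) x (by simp [hx]) (by
      rw [derivative_sub, derivative_C, sub_zero, derivative_X_pow]
      simp [hx0, hp1])
    have hzp : (z : ℚ_[l]) ^ p = m := by
      simp only [map_sub, map_pow, aeval_X, aeval_C, sub_eq_zero] at hz
      have := congrArg (fun w : ℤ_[l] => (w : ℚ_[l])) hz
      simpa using this
    let φ : L →+* ℚ_[l] := AdjoinRoot.lift (algebraMap ℚ ℚ_[l]) (z : ℚ_[l]) (by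
      simp [hzp])
    refine ⟨resHom φ, ?_⟩
    have h1 : intPadicHom φ t = z := by
      apply PadicInt.ext
      rw [intPadicHom_coe]
      change φ θ = z
      exact AdjoinRoot.lift_root _
    change PadicInt.toZMod (intPadicHom φ t) = x
    rw [h1, hzx]
  have hex : ∀ l : ℕ, ∃ P Q : Ideal (𝓞 L), (l.Prime → ¬ l ∣ M → (P.IsPrime ∧ Ideal.absNorm P = l)
      ∧ ((l : ZMod p) = 1 → Q.IsPrime ∧ Ideal.absNorm Q = l ∧ Q ≠ P)) := by
    intro l
    by_cases h : l.Prime ∧ ¬ l ∣ M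
    · obtain ⟨hl, hlM⟩ := h
      have : Fact l.Prime := ⟨hl⟩
      obtain ⟨x, hx⟩ := hcon l (hB l hl hlM) hl
      obtain ⟨f, hf⟩ := hhom l hl hlM x hx
      by_cases h1 : (l : ZMod p) = 1
      · have : Fact p.Prime := ⟨hp⟩
        obtain ⟨ζ, hζ⟩ := exists_prime_orderOf_dvd_card (G := (ZMod l)ˣ) p (by
          rw [ZMod.card_units]
          have : ((1 : ℕ) : ZMod p) = (l : ℕ) := by rw [h1]; simp
          rw [ZMod.natCast_eq_natCast_iff] at this
          exact (Nat.modEq_iff_dvd' hl.one_lt.le).mp this)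
        have hζ1 : (ζ : ZMod l) ≠ 1 := by
          intro h
          have : ζ = 1 := Units.ext h
          rw [this, orderOf_one] at hζ
          exact hp.one_lt.ne hζ
        have hζp : (ζ : ZMod l) ^ p = 1 := by
          rw [← Units.val_pow_eq_pow_val, ← hζ, pow_orderOf_eq_one, Units.val_one]
        obtain ⟨g, hg⟩ := hhom l hl hlM (ζ * x) (by rw [mul_pow, hζp, one_mul, hx])
        refine ⟨RingHom.ker f, RingHom.ker g, fun _ _ => ⟨⟨RingHom.ker_isPrime f,
          absNorm_ker_zmod f⟩, fun _ => ⟨RingHom.ker_isPrime g, absNorm_ker_zmod g, ?_⟩⟩⟩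
        intro hker
        have hmem : t - (x.val : 𝓞 L) ∈ RingHom.ker f := by
          rw [RingHom.mem_ker, map_sub, hf, map_natCast, ZMod.natCast_zmod_val, sub_self]
        rw [← hker, RingHom.mem_ker, map_sub, hg, map_natCast, ZMod.natCast_zmod_val] at hmem
        have hx0 : x ≠ 0 := by
          rintro rfl
          rw [zero_pow hp.ne_zero, eq_comm, ZMod.natCast_eq_zero_iff] at hx
          exact hlM (Dvd.dvd.mul_right (Dvd.dvd.mul_left hx _) _)
        apply hζ1
        have : ((ζ : ZMod l) - 1) * x = 0 := by linear_combination hmem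
        rcases mul_eq_zero.mp this with h | h
        · exact sub_eq_zero.mp h
        · exact absurd h hx0
      · exact ⟨RingHom.ker f, ⊥, fun _ _ => ⟨⟨RingHom.ker_isPrime f, absNorm_ker_zmod f⟩,
          fun h => absurd h h1⟩⟩
    · exact ⟨⊥, ⊥, fun h1 h2 => absurd ⟨h1, h2⟩ h⟩
  choose P Q hPQ using hex
  have hsum := count_summable L M hM P Q {l | l.Prime ∧ ¬ l ∣ M ∧ (l : ZMod p) = 1}
    (fun l hl hlM => (hPQ l hl hlM).1)
    (fun l hl => ⟨hl.1, hl.2.1, (hPQ l hl.1 hl.2.1).2 hl.2.2⟩)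
  have : NeZero p := ⟨hp.ne_zero⟩
  apply not_summable_prime_ap p 1 isUnit_one
  refine hsum.congr_cofinite ?_
  have hfin : {l : ℕ | l ∣ M}.Finite := (Set.finite_Iic M).subset fun l hl => Nat.le_of_dvd hM hl
  filter_upwards [hfin.compl_mem_cofinite] with l hl
  have hl' : ¬ l ∣ M := hl
  simp [Set.indicator, hl']


lemma not_pow_rat (p a b c d : ℕ) (hp : p.Prime) (ha : a < p) (hb : b < p) (hc : c < p)
    (hd : d < p) (h0 : ¬ (a = 0 ∧ b = 0 ∧ c = 0 ∧ d = 0)) (x : ℚ) :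
    x ^ p ≠ ((2 ^ a * 3 ^ b * 5 ^ c * 7 ^ d : ℕ) : ℚ) := by
  intro h
  have key : ∀ q : ℕ, q.Prime → (p : ℤ) ∣ padicValNat q (2 ^ a * 3 ^ b * 5 ^ c * 7 ^ d) := by
    intro q hq
    have : Fact q.Prime := ⟨hq⟩
    have h1 := congrArg (padicValRat q) h
    rw [padicValRat.of_nat, padicValRat.pow] at h1
    exact ⟨_, h1.symm⟩
  have hv : ∀ q : ℕ, q.Prime → padicValNat q (2 ^ a * 3 ^ b * 5 ^ c * 7 ^ d) =
      a * padicValNat q 2 + b * padicValNat q 3 + c * padicValNat q 5 + d * padicValNat q 7 := by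
    intro q hq
    have : Fact q.Prime := ⟨hq⟩
    rw [padicValNat.mul (by positivity) (by positivity), padicValNat.mul (by positivity)
      (by positivity), padicValNat.mul (by positivity) (by positivity)]
    simp only [padicValNat.pow]
  have z : ∀ q r : ℕ, q.Prime → r.Prime → q ≠ r → padicValNat q r = 0 := by
    intro q r hq hr hne
    exact padicValNat.eq_zero_of_not_dvd (fun hh => hne ((Nat.prime_dvd_prime_iff_eq hq hr).mp hh))
  have s : ∀ q : ℕ, q.Prime → padicValNat q q = 1 := by
    intro q hq
    have : Fact q.Prime := ⟨hq⟩
    exact padicValNat.self hq.one_lt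
  have small : ∀ a : ℕ, a < p → (p : ℤ) ∣ (a : ℕ) → a = 0 := by
    intro a ha h
    exact Nat.eq_zero_of_dvd_of_lt (by exact_mod_cast h) ha
  have p2 := Nat.prime_two
  have p3 := Nat.prime_three
  have p5 := Nat.prime_five
  have p7 : Nat.Prime 7 := by norm_num
  have k2 := key 2 p2
  have k3 := key 3 p3
  have k5 := key 5 p5
  have k7 := key 7 p7
  rw [hv 2 p2, s 2 p2, z 2 3 p2 p3 (by norm_num), z 2 5 p2 p5 (by norm_num),
    z 2 7 p2 p7 (by norm_num)] at k2
  rw [hv 3 p3, s 3 p3, z 3 2 p3 p2 (by norm_num), z 3 5 p3 p5 (by norm_num),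
    z 3 7 p3 p7 (by norm_num)] at k3
  rw [hv 5 p5, s 5 p5, z 5 3 p5 p3 (by norm_num), z 5 2 p5 p2 (by norm_num),
    z 5 7 p5 p7 (by norm_num)] at k5
  rw [hv 7 p7, s 7 p7, z 7 3 p7 p3 (by norm_num), z 7 5 p7 p5 (by norm_num),
    z 7 2 p7 p2 (by norm_num)] at k7
  simp only [mul_one, mul_zero, add_zero, zero_add] at k2 k3 k5 k7
  exact h0 ⟨small a ha k2, small b hb k3, small c hc k5, small d hd k7⟩

lemma exists_modulus (n : ℕ) (hn : 1 < n) (hodd : Odd n) :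
    ∃ M : ℕ, 0 < M ∧ Nat.Coprime M 210 ∧
      (∃ l, l.Prime ∧ l ∣ M ∧ Nat.Coprime (l * (l - 1)) n) ∧
      ∀ p : ℕ, p.Prime → p ∣ n → ∀ a b c d : ℤ,
        (∀ l : ℕ, ∀ _ : Fact l.Prime, l ∣ M → ∃ x : ZMod l,
          x ^ p = (2 : ZMod l) ^ a * 3 ^ b * 5 ^ c * 7 ^ d) →
        (p : ℤ) ∣ a ∧ (p : ℤ) ∣ b ∧ (p : ℤ) ∣ c ∧ (p : ℤ) ∣ d := by
  classical
  have hch : ∀ t : ℕ × ℕ × ℕ × ℕ × ℕ, ∃ l > 7, l.Prime ∧ (t.1.Prime → t.2.1 < t.1 →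
      t.2.2.1 < t.1 → t.2.2.2.1 < t.1 → t.2.2.2.2 < t.1 →
      ¬ (t.2.1 = 0 ∧ t.2.2.1 = 0 ∧ t.2.2.2.1 = 0 ∧ t.2.2.2.2 = 0) →
      ¬ ∃ x : ZMod l, x ^ t.1 = ((2 ^ t.2.1 * 3 ^ t.2.2.1 * 5 ^ t.2.2.2.1 * 7 ^ t.2.2.2.2 : ℕ) : ZMod l)) := by
    rintro ⟨p, a, b, c, d⟩
    dsimp only
    by_cases h : p.Prime ∧ a < p ∧ b < p ∧ c < p ∧ d < p ∧ ¬ (a = 0 ∧ b = 0 ∧ c = 0 ∧ d = 0)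
    · obtain ⟨hp, ha, hb, hc, hd, h0⟩ := h
      obtain ⟨l, hl, hlp, hx⟩ := exists_prime_nonresidue p hp (2 ^ a * 3 ^ b * 5 ^ c * 7 ^ d)
        (by positivity) (not_pow_rat p a b c d hp ha hb hc hd h0) 7
      exact ⟨l, hl, hlp, fun _ _ _ _ _ _ => hx⟩
    · exact ⟨11, by norm_num, by norm_num, fun h1 h2 h3 h4 h5 h6 =>
        absurd ⟨h1, h2, h3, h4, h5, h6⟩ h⟩
  choose l hl7 hlp hlx using hch
  obtain ⟨l0, hl0, hl0p, hl0m⟩ := Nat.forall_exists_prime_gt_and_modEq 7 (q := n) (a := 2)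
    (by omega) (Nat.coprime_two_left.mpr hodd)
  have hcop210 : ∀ l : ℕ, l.Prime → 7 < l → Nat.Coprime l 210 := by
    intro l hl h7
    rw [Nat.Prime.coprime_iff_not_dvd hl]
    intro h
    have : l ∈ Nat.primeFactors 210 := Nat.mem_primeFactors.mpr ⟨hl, h, by norm_num⟩
    have h210 : Nat.primeFactors 210 = {2, 3, 5, 7} := by
      rw [show 210 = 2 * (3 * (5 * 7)) by norm_num, Nat.primeFactors_mul (by norm_num) (by norm_num),
        Nat.primeFactors_mul (by norm_num) (by norm_num),
        Nat.primeFactors_mul (by norm_num) (by norm_num), Nat.prime_two.primeFactors,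
        Nat.prime_three.primeFactors, Nat.prime_five.primeFactors,
        (by norm_num : Nat.Prime 7).primeFactors]
      rfl
    rw [h210] at this
    simp at this
    omega
  let R := Finset.range (n + 1)
  let T : Finset (ℕ × ℕ × ℕ × ℕ × ℕ) := R ×ˢ R ×ˢ R ×ˢ R ×ˢ R
  refine ⟨l0 * ∏ t ∈ T, l t, ?_, ?_, ⟨l0, hl0p, Dvd.intro _ rfl, ?_⟩, ?_⟩
  · exact Nat.mul_pos hl0p.pos (Finset.prod_pos fun t _ => (hlp t).pos)
  · exact Nat.Coprime.mul_left (hcop210 _ hl0p hl0)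
      (Nat.Coprime.prod_left fun t _ => hcop210 _ (hlp t) (hl7 t))
  · apply Nat.Coprime.mul_left
    · rw [Nat.coprime_iff_gcd_eq_one, hl0m.gcd_eq]
      exact Nat.coprime_two_left.mpr hodd
    · have : l0 - 1 ≡ 1 [MOD n] := by
        have h1 : (l0 - 1) + 1 ≡ 1 + 1 [MOD n] := by
          rw [Nat.sub_add_cancel hl0p.one_lt.le]; exact hl0m
        exact Nat.ModEq.add_right_cancel' 1 h1
      rw [Nat.coprime_iff_gcd_eq_one, this.gcd_eq]
      simp
  · intro p hp hpn a b c d h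
    have hp0 : (p : ℤ) ≠ 0 := by exact_mod_cast hp.ne_zero
    have hpp : (0 : ℤ) < p := by exact_mod_cast hp.pos
    have hred : ∀ a : ℤ, ∃ (a' : ℕ) (q : ℤ), a = a' + p * q ∧ a' < p := by
      intro a
      refine ⟨(a % p).toNat, a / p, ?_, ?_⟩
      · rw [Int.toNat_of_nonneg (Int.emod_nonneg _ hp0), Int.emod_add_mul_ediv]
      · have := Int.emod_lt_of_pos a hpp
        have := Int.emod_nonneg a hp0
        omega
    obtain ⟨a', qa, rfl, ha⟩ := hred a
    obtain ⟨b', qb, rfl, hb⟩ := hred b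
    obtain ⟨c', qc, rfl, hc⟩ := hred c
    obtain ⟨d', qd, rfl, hd⟩ := hred d
    by_cases h0 : a' = 0 ∧ b' = 0 ∧ c' = 0 ∧ d' = 0
    · obtain ⟨rfl, rfl, rfl, rfl⟩ := h0
      simp
    exfalso
    let t : ℕ × ℕ × ℕ × ℕ × ℕ := (p, a', b', c', d')
    have htT : t ∈ T := by
      have := Nat.le_of_dvd (by omega) hpn
      simp only [T, R, t, Finset.mem_product, Finset.mem_range]
      omega
    have hf : Fact (l t).Prime := ⟨hlp t⟩
    have hcp := hcop210 _ (hlp t) (hl7 t)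
    have hne : ∀ q : ℕ, q ∣ 210 → ((q : ℕ) : ZMod (l t)) ≠ 0 := by
      intro q hq h
      rw [ZMod.natCast_eq_zero_iff] at h
      have h1 := Nat.dvd_gcd dvd_rfl (h.trans hq)
      rw [hcp] at h1
      exact (hlp t).one_lt.ne' (Nat.dvd_one.mp h1)
    have h2 : (2 : ZMod (l t)) ≠ 0 := by exact_mod_cast hne 2 (by norm_num)
    have h3 : (3 : ZMod (l t)) ≠ 0 := by exact_mod_cast hne 3 (by norm_num)
    have h5 : (5 : ZMod (l t)) ≠ 0 := by exact_mod_cast hne 5 (by norm_num)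
    have h7 : (7 : ZMod (l t)) ≠ 0 := by exact_mod_cast hne 7 (by norm_num)
    obtain ⟨x, hx⟩ := h (l t) hf (Dvd.dvd.mul_left (Finset.dvd_prod_of_mem l htT) _)
    apply hlx t hp ha hb hc hd h0
    refine ⟨x * (2 ^ qa * 3 ^ qb * 5 ^ qc * 7 ^ qd)⁻¹, ?_⟩
    have e : ∀ q : ℤ, ∀ z : ZMod (l t), z ^ (↑p * q) = (z ^ q) ^ p := by
      intro q z; rw [mul_comm, zpow_mul, zpow_natCast]
    rw [mul_pow, hx, zpow_add₀ h2, zpow_add₀ h3, zpow_add₀ h5, zpow_add₀ h7, e, e, e, e]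
    have k1 := zpow_ne_zero qa h2
    have k2 := zpow_ne_zero qb h3
    have k3 := zpow_ne_zero qc h5
    have k4 := zpow_ne_zero qd h7
    generalize (2 : ZMod (l t)) ^ qa = A at k1 ⊢
    generalize (3 : ZMod (l t)) ^ qb = B at k2 ⊢
    generalize (5 : ZMod (l t)) ^ qc = C at k3 ⊢
    generalize (7 : ZMod (l t)) ^ qd = D at k4 ⊢
    have key : ((2 : ZMod (l t)) ^ a' * A ^ p * (3 ^ b' * B ^ p) * (5 ^ c' * C ^ p) * (7 ^ d' * D ^ p)) *
      (A * B * C * D)⁻¹ ^ p = 2 ^ a' * 3 ^ b' * 5 ^ c' * 7 ^ d' := by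
      have : (A * B * C * D) ^ p * (A * B * C * D)⁻¹ ^ p = 1 := by
        rw [← mul_pow, mul_inv_cancel₀ (mul_ne_zero (mul_ne_zero (mul_ne_zero k1 k2) k3) k4), one_pow]
      linear_combination (2 ^ a' * 3 ^ b' * 5 ^ c' * 7 ^ d') * this
    simp only [zpow_natCast]
    rw [key]
    change _ = (((2 ^ a' * 3 ^ b' * 5 ^ c' * 7 ^ d' : ℕ)) : ZMod (l t))
    push_cast
    rfl


/-- Abstract rank lemma. -/
lemma rank_abstract {A : Type*} [AddCommGroup A] (n : ℕ)
    (c : (Fin 7 → ℤ) →ₗ[ℤ] A) (hc : ∀ f, n • c f = 0)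
    (H : Submodule ℤ ((Fin 7 → ℤ) × (Fin 2 → ℤ)))
    (h1 : ∀ f, (f, (0 : Fin 2 → ℤ)) ∈ H → ∀ i, (n : ℤ) ∣ f i)
    (h2 : ∀ f, c f = 0 → ∃ s, (f, s) ∈ H) :
    ∃ φ : (Fin 5 → ZMod n) →+ A, Function.Injective φ := by
  classical
  -- the projection of `H` to `ℤ²`
  let R : Submodule ℤ (Fin 2 → ℤ) := H.map (LinearMap.snd ℤ _ _)
  obtain ⟨m, ⟨bR⟩⟩ := Submodule.nonempty_basis_of_pid (Pi.basisFun ℤ (Fin 2)) R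
  have hm : m ≤ 2 := by
    have e1 : Module.finrank ℤ R = m := by
      rw [Module.finrank_eq_card_basis bR, Fintype.card_fin]
    have e2 := Submodule.finrank_le R
    simp only [Module.finrank_fintype_fun_eq_card, Fintype.card_fin] at e2
    omega
  have hlift : ∀ i : Fin m, ∃ v : Fin 7 → ℤ, (v, ((bR i : R) : Fin 2 → ℤ)) ∈ H := by
    intro i
    obtain ⟨⟨v, s⟩, hv, hs⟩ := (bR i).2
    refine ⟨v, ?_⟩
    have : s = ((bR i : R) : Fin 2 → ℤ) := hs
    rw [← this]; exact hv
  choose v hv using hlift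
  let V : Submodule ℤ (Fin 7 → ℤ) := Submodule.span ℤ (Set.range v)
  have hV : Module.finrank ℤ V ≤ 2 := by
    have := finrank_range_le_card (R := ℤ) v
    simp only [Set.finrank, Fintype.card_fin] at this
    exact this.trans hm
  -- kernel of `c` lies in `V + nℤ⁷`
  have hker : ∀ f, c f = 0 → ∃ w ∈ V, ∀ i, (n : ℤ) ∣ (f - w) i := by
    intro f hf
    obtain ⟨s, hs⟩ := h2 f hf
    have hsR : s ∈ R := ⟨(f, s), hs, rfl⟩
    let r := bR.repr ⟨s, hsR⟩
    have hr : ∑ i, r i • ((bR i : R) : Fin 2 → ℤ) = s := by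
      have := congrArg (Subtype.val) (bR.sum_repr ⟨s, hsR⟩)
      rw [AddSubmonoidClass.coe_finsetSum] at this
      exact this
    refine ⟨∑ i, r i • v i, Submodule.sum_mem _ fun i _ => Submodule.smul_mem _ _
      (Submodule.subset_span ⟨i, rfl⟩), h1 _ ?_⟩
    have hmem : ∑ i, r i • (v i, ((bR i : R) : Fin 2 → ℤ)) ∈ H :=
      Submodule.sum_mem _ fun i _ => Submodule.smul_mem _ _ (hv i)
    have heq : ((f - ∑ i, r i • v i, (0 : Fin 2 → ℤ)) : (Fin 7 → ℤ) × (Fin 2 → ℤ)) =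
        (f, s) - ∑ i, r i • (v i, ((bR i : R) : Fin 2 → ℤ)) := by
      ext1
      · simp [Prod.fst_sum]
      · simp only [Prod.snd_sub, Prod.snd_sum, Prod.smul_snd]
        rw [hr, sub_self]
    rw [heq]
    exact H.sub_mem hs hmem
  obtain ⟨k, sn⟩ := Submodule.smithNormalForm (Pi.basisFun ℤ (Fin 7)) V
  have hk : k ≤ 2 := by
    have : Module.finrank ℤ V = k := by
      rw [Module.finrank_eq_card_basis sn.bN, Fintype.card_fin]
    omega
  -- five indices outside the range of `sn.f`
  obtain ⟨j, hj⟩ : ∃ j : Fin 5 ↪ Fin 7, ∀ i, j i ∉ Set.range sn.f := by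
    let s : Finset (Fin 7) := (Finset.univ.image sn.f)ᶜ
    have hs : 5 ≤ s.card := by
      have h3 : (Finset.univ.image sn.f).card ≤ k := by
        simpa using (Finset.card_image_le (s := (Finset.univ : Finset (Fin k))) (f := sn.f))
      rw [Finset.card_compl, Fintype.card_fin]
      omega
    obtain ⟨e⟩ := Function.Embedding.nonempty_of_card_le (α := Fin 5) (β := s) (by simpa using hs)
    refine ⟨e.trans (Function.Embedding.subtype _), fun i hi => ?_⟩
    have := (e i).2
    simp only [s, Finset.mem_compl, Finset.mem_image, Finset.mem_univ, true_and] at this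
    exact this hi
  have hVj : ∀ w ∈ V, ∀ i, sn.bM.repr w (j i) = 0 := by
    intro w hw i
    exact sn.repr_eq_zero_of_notMem_range ⟨w, hw⟩ (hj i)
  have hnj : ∀ w : Fin 7 → ℤ, (∀ i, (n : ℤ) ∣ w i) → ∀ i, (n : ℤ) ∣ sn.bM.repr w i := by
    intro w hw i
    choose u hu using hw
    have : w = (n : ℤ) • u := by ext t; simp [hu]
    rw [this, map_smul]
    exact ⟨_, rfl⟩
  let C : Fin 5 → A := fun i => c (sn.bM (j i))
  let ψ : Fin 5 → (ZMod n →+ A) := fun i =>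
    ZMod.lift n ⟨zmultiplesHom A (C i), by simpa using hc _⟩
  let φ : (Fin 5 → ZMod n) →+ A := ∑ i, (ψ i).comp (Pi.evalAddMonoidHom _ i)
  refine ⟨φ, (injective_iff_map_eq_zero φ).mpr fun a ha => ?_⟩
  choose z hz using fun i => ZMod.intCast_surjective (a i)
  have e1 : φ a = c (∑ i, z i • sn.bM (j i)) := by
    simp only [φ, AddMonoidHom.finsetSum_apply, AddMonoidHom.comp_apply,
      Pi.evalAddMonoidHom_apply, map_sum, map_smul]
    refine Finset.sum_congr rfl fun i _ => ?_
    rw [← hz i]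
    simp [ψ, C]
  rw [e1] at ha
  obtain ⟨w, hw, hd⟩ := hker _ ha
  ext i
  rw [← hz i]
  have h3 := hnj _ hd (j i)
  rw [map_sub, Finsupp.sub_apply, hVj w hw i, sub_zero] at h3
  have h4 : sn.bM.repr (∑ i, z i • sn.bM (j i)) (j i) = z i := by
    simp only [map_sum, map_smul, Module.Basis.repr_self, Finsupp.finsetSum_apply,
      Finsupp.smul_apply, Finsupp.single_apply, j.injective.eq_iff]
    simp
  rw [h4] at h3
  exact (ZMod.intCast_zmod_eq_zero_iff_dvd _ _).mpr h3




open nonZeroDivisors in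
lemma rank_of_data (K : Type*) [Field K] [NumberField K] (n : ℕ)
    (hrank : NumberField.Units.rank K = 2)
    (htors : ∀ ζ ∈ NumberField.Units.torsion K, ∃ ξ : (𝓞 K)ˣ, ξ ^ n = ζ)
    (α : Fin 7 → Kˣ) (I : Fin 7 → (FractionalIdeal (𝓞 K)⁰ K)ˣ)
    (hI : ∀ i, I i ^ n = toPrincipalIdeal (𝓞 K) K (α i))
    (hind : ∀ f : Fin 7 → ℤ, ∀ β : Kˣ, ∏ i, α i ^ f i = β ^ n → ∀ i, (n : ℤ) ∣ f i) :
    HasZModRankGE (ClassGroup (𝓞 K)) n 5 := by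
  classical
  have hlc : ∀ {G : Type _} [CommGroup G] (g : Fin 7 → G) (f : Fin 7 → ℤ),
      Fintype.linearCombination ℤ (fun i => Additive.ofMul (g i)) f =
        Additive.ofMul (∏ i, g i ^ f i) := by
    intro G _ g f
    simp [Fintype.linearCombination_apply]
  obtain ⟨ε, hε⟩ : ∃ ε : Fin 2 → (𝓞 K)ˣ, ∀ u : (𝓞 K)ˣ, ∃ ζ ∈ NumberField.Units.torsion K,
      ∃ s : Fin 2 → ℤ, u = ζ * ∏ i, ε i ^ s i := by
    refine ⟨fun i => NumberField.Units.fundSystem K (finCongr hrank.symm i), fun u => ?_⟩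
    obtain ⟨⟨ζ, e⟩, h, -⟩ := NumberField.Units.exist_unique_eq_mul_prod K u
    refine ⟨ζ, ζ.2, fun i => e (finCongr hrank.symm i), ?_⟩
    rw [h]
    congr 1
    exact (Equiv.prod_comp (finCongr hrank.symm)
      (fun i => NumberField.Units.fundSystem K i ^ e i)).symm
  let uK : (𝓞 K)ˣ →* Kˣ := Units.map (algebraMap (𝓞 K) K : 𝓞 K →* K)
  let c : (Fin 7 → ℤ) →ₗ[ℤ] Additive (ClassGroup (𝓞 K)) :=
    Fintype.linearCombination ℤ (fun i => Additive.ofMul (ClassGroup.mk K (I i)))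
  let a : (Fin 7 → ℤ) →ₗ[ℤ] Additive Kˣ :=
    Fintype.linearCombination ℤ (fun i => Additive.ofMul (α i))
  let e : (Fin 2 → ℤ) →ₗ[ℤ] Additive Kˣ :=
    Fintype.linearCombination ℤ (fun i => Additive.ofMul (uK (ε i)))
  let H : Submodule ℤ ((Fin 7 → ℤ) × (Fin 2 → ℤ)) :=
    (LinearMap.range ((n : ℤ) • (LinearMap.id : Additive Kˣ →ₗ[ℤ] Additive Kˣ))).comap
      (a ∘ₗ LinearMap.fst ℤ _ _ - e ∘ₗ LinearMap.snd ℤ _ _)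
  have hH : ∀ f s, (f, s) ∈ H ↔ ∃ β : Kˣ, β ^ n = (∏ i, α i ^ f i) / ∏ i, uK (ε i) ^ s i := by
    intro f s
    have e1 : e s = Additive.ofMul (∏ i, uK (ε i) ^ s i) := by
      simp [e, Fintype.linearCombination_apply]
    have e2 : a f = Additive.ofMul (∏ i, α i ^ f i) := hlc α f
    simp only [H, Submodule.mem_comap, LinearMap.sub_apply, LinearMap.comp_apply,
      LinearMap.fst_apply, LinearMap.snd_apply, LinearMap.mem_range, LinearMap.smul_apply,
      LinearMap.id_apply, e1, e2]
    constructor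
    · rintro ⟨β, hβ⟩
      refine ⟨β.toMul, ?_⟩
      have := congrArg Additive.toMul hβ
      simpa using this
    · rintro ⟨β, hβ⟩
      refine ⟨Additive.ofMul β, ?_⟩
      rw [← ofMul_div, ← hβ]
      simp
  have hcn : ∀ i, (ClassGroup.mk K (I i)) ^ n = 1 := by
    intro i
    rw [← map_pow, hI]
    rw [ClassGroup.mk_eq_one_iff]
    rw [coe_toPrincipalIdeal]
    exact ⟨α i, FractionalIdeal.coe_spanSingleton _ _⟩
  obtain ⟨φ, hφ⟩ := rank_abstract n c (by
      intro f
      rw [show c f = _ from hlc _ f, ← ofMul_pow, ← Finset.prod_pow]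
      have : ∀ i, (ClassGroup.mk K (I i) ^ f i) ^ n = 1 := by
        intro i
        rw [← zpow_natCast, ← zpow_mul, mul_comm, zpow_mul, zpow_natCast, hcn, one_zpow]
      simp [this]) H (by
      intro f hf
      rw [hH] at hf
      obtain ⟨β, hβ⟩ := hf
      apply hind f β
      simpa using hβ.symm) (by
      intro f hf
      rw [show c f = _ from hlc _ f] at hf
      have h1 : ∏ i, ClassGroup.mk K (I i) ^ f i = 1 := hf
      have h2 : ClassGroup.mk K (∏ i, I i ^ f i) = 1 := by
        rw [← h1, map_prod]; simp
      rw [ClassGroup.mk_eq_one_iff] at h2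
      obtain ⟨x, hx⟩ := h2.principal
      have hx' : ∃ x : K, FractionalIdeal.spanSingleton (𝓞 K)⁰ x =
          ((∏ i, I i ^ f i : (FractionalIdeal (𝓞 K)⁰ K)ˣ) : FractionalIdeal (𝓞 K)⁰ K) := by
        refine ⟨x, FractionalIdeal.coeToSubmodule_injective ?_⟩
        exact (FractionalIdeal.coe_spanSingleton _ _).trans hx.symm
      rw [← mem_principal_ideals_iff] at hx'
      obtain ⟨β, hβ⟩ := hx'
      have h3 : toPrincipalIdeal (𝓞 K) K ((∏ i, α i ^ f i) / β ^ n) = 1 := by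
        rw [_root_.map_div, map_pow, hβ, map_prod, ← Finset.prod_pow, div_eq_one]
        refine Finset.prod_congr rfl fun i _ => ?_
        rw [map_zpow, ← hI, ← zpow_natCast, ← zpow_natCast, ← zpow_mul, ← zpow_mul, mul_comm]
      obtain ⟨u, hu⟩ : ∃ u : (𝓞 K)ˣ, uK u = (∏ i, α i ^ f i) / β ^ n := by
        have h4 : ∀ w : Kˣ, toPrincipalIdeal (𝓞 K) K w = 1 →
            ∃ r : 𝓞 K, algebraMap (𝓞 K) K r = w := by
          intro w hw
          rw [toPrincipalIdeal_eq_iff] at hw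
          have h5 := FractionalIdeal.mem_spanSingleton_self (𝓞 K)⁰ (w : K)
          rw [hw, Units.val_one, FractionalIdeal.mem_one_iff] at h5
          exact h5
        generalize (∏ i, α i ^ f i) / β ^ n = w at h3
        obtain ⟨r, hr⟩ := h4 w h3
        obtain ⟨r', hr'⟩ := h4 w⁻¹ (by rw [map_inv, h3, inv_one])
        refine ⟨⟨r, r', ?_, ?_⟩, Units.ext hr⟩
        · apply FaithfulSMul.algebraMap_injective (𝓞 K) K
          rw [map_mul, hr, hr', map_one]; simp
        · apply FaithfulSMul.algebraMap_injective (𝓞 K) K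
          rw [map_mul, hr, hr', map_one]; simp
      obtain ⟨ζ, hζ, s, rfl⟩ := hε u
      obtain ⟨ξ, rfl⟩ := htors ζ hζ
      refine ⟨s, (hH f s).mpr ⟨uK ξ * β, ?_⟩⟩
      rw [map_mul, map_pow, map_prod, eq_div_iff_mul_eq'] at hu
      rw [← hu, mul_pow]
      simp only [map_zpow]
      rw [eq_div_iff_mul_eq']
      ac_rfl)
  exact ⟨AddMonoidHom.toMultiplicativeLeft φ, fun x y h => hφ h⟩


/-- A group of order six with a non-central involution is isomorphic to `S₃`. -/
lemma mulEquiv_perm_of_card_six {G : Type*} [Group G] (hG : Nat.card G = 6) (a b : G)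
    (ha : a ^ 2 = 1) (hab : a * b ≠ b * a) : Nonempty (G ≃* Equiv.Perm (Fin 3)) := by
  classical
  have hfin : Finite G := Nat.finite_of_card_ne_zero (by omega)
  have ha1 : a ≠ 1 := by rintro rfl; simp at hab
  have hord : orderOf a = 2 := orderOf_eq_prime ha ha1
  have hmem : ∀ g ∈ Subgroup.zpowers a, g = 1 ∨ g = a := by
    intro g hg
    obtain ⟨k, rfl⟩ := Subgroup.mem_zpowers_iff.mp hg
    rcases Int.even_or_odd' k with ⟨m, rfl | rfl⟩
    · left; rw [zpow_mul]; norm_cast; rw [ha]; simp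
    · right; rw [zpow_add, zpow_mul]; norm_cast; rw [ha]; simp
  let H := Subgroup.zpowers a
  have hH : Nat.card H = 2 := by rw [Nat.card_zpowers, hord]
  have hidx : Nat.card (G ⧸ H) = 3 := by
    have := Subgroup.card_eq_card_quotient_mul_card_subgroup H
    rw [hG, hH] at this
    omega
  let f := MulAction.toPermHom G (G ⧸ H)
  have hf : Function.Injective f := by
    rw [← MonoidHom.ker_eq_bot_iff]
    rw [← Subgroup.normalCore_eq_ker, eq_bot_iff]
    intro g hg
    have h1 := Subgroup.normalCore_le _ hg
    rcases hmem g h1 with rfl | rfl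
    · exact Subgroup.mem_bot.mpr rfl
    · exfalso
      have h2 : b * g * b⁻¹ ∈ H := hg b
      rcases hmem _ h2 with h3 | h3
      · apply ha1
        rw [mul_inv_eq_one] at h3
        simpa using h3
      · apply hab
        rw [mul_inv_eq_iff_eq_mul] at h3
        exact h3.symm
  have hcard : Nat.card (Equiv.Perm (G ⧸ H)) = 6 := by
    rw [Nat.card_perm, hidx]; rfl
  have hbij : Function.Bijective f := by
    have : Finite (Equiv.Perm (G ⧸ H)) := Nat.finite_of_card_ne_zero (by omega)
    rw [Nat.bijective_iff_injective_and_card]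
    exact ⟨hf, by rw [hG, hcard]⟩
  have e : G ⧸ H ≃ Fin 3 := Finite.equivFinOfCardEq hidx
  exact ⟨(MulEquiv.ofBijective f hbij).trans e.permCongrHom⟩

/-- The sextic, with integral parameter. -/
noncomputable def pz (A : ℤ) : ℤ[X] :=
  X ^ 6 + C 3 * X ^ 5 + C A * X ^ 4 + C (2 * A - 5) * X ^ 3 + C A * X ^ 2 + C 3 * X + 1

lemma pz_natDegree (A : ℤ) : (pz A).natDegree = 6 := by unfold pz; compute_degree!
lemma pz_monic (A : ℤ) : (pz A).Monic := by unfold pz; monicity!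

lemma aeval_pz {R : Type*} [CommRing R] (A : ℤ) (x : R) :
    aeval x (pz A) = (x ^ 2 + x + 1) ^ 3 + ((A : R) - 6) * (x ^ 2 * (x + 1) ^ 2) := by
  simp only [pz, map_add, map_mul, map_pow, aeval_X, aeval_C, map_one]
  simp only [eq_intCast]
  push_cast
  ring

lemma pz_real_pos (A : ℤ) (hA : 6 ≤ A) (x : ℝ) : 0 < aeval x (pz A) := by
  rw [aeval_pz]
  have h1 : 0 < x ^ 2 + x + 1 := by nlinarith [sq_nonneg (x + 1 / 2)]
  have h2 : (6 : ℝ) ≤ A := by exact_mod_cast hA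
  have h3 : 0 ≤ ((A : ℝ) - 6) * (x ^ 2 * (x + 1) ^ 2) :=
    mul_nonneg (by linarith) (by positivity)
  positivity

lemma pz_irreducible_int (A : ℤ) (hA : 6 ≤ A) (hodd : A % 2 = 1) : Irreducible (pz A) := by
  have hne : pz A ≠ 1 := by
    intro h
    have := pz_natDegree A
    rw [h, natDegree_one] at this
    omega
  rw [(pz_monic A).irreducible_iff_lt_natDegree_lt hne]
  intro q hq hdeg hdvd
  rw [pz_natDegree, Finset.mem_Ioc] at hdeg
  -- no real root
  have hreal : ∀ x : ℝ, aeval x q ≠ 0 := by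
    intro x hx
    obtain ⟨g, hg⟩ := hdvd
    have := pz_real_pos A hA x
    rw [hg, map_mul, hx, zero_mul] at this
    exact lt_irrefl _ this
  have hsum := hq.as_sum
  have hdeg' : q.natDegree = 1 ∨ q.natDegree = 2 ∨ q.natDegree = 3 := by omega
  rcases hdeg' with h | h | h
  · rw [h] at hsum
    apply hreal (-(q.coeff 0 : ℤ) : ℝ)
    rw [hsum]
    simp
  · rw [h] at hsum
    have hq2 : q = X ^ 2 + C (q.coeff 1) * X + C (q.coeff 0) := by
      conv_lhs => rw [hsum]
      simp [Finset.sum_range_succ]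
      ring
    have hev : ∀ r : ZMod 2, aeval r q ≠ 0 := by
      intro r hr
      obtain ⟨g, hg⟩ := hdvd
      have h1 : aeval r (pz A) = 0 := by rw [hg, map_mul, hr, zero_mul]
      rw [aeval_pz] at h1
      have h2 : (A : ZMod 2) = 1 := by
        have : ((A : ℤ) : ZMod 2) = ((1 : ℤ) : ZMod 2) :=
          (ZMod.intCast_eq_intCast_iff _ _ _).mpr hodd
        simpa using this
      rw [h2] at h1
      clear hr
      revert h1
      revert r
      decide
    have h0 := hev 0
    have h1 := hev 1
    rw [hq2] at h0 h1
    simp only [map_add, map_mul, map_pow, aeval_X, aeval_C] at h0 h1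
    simp only [eq_intCast] at h0 h1
    have hu : ((q.coeff 1 : ℤ) : ZMod 2) = 1 ∧ ((q.coeff 0 : ℤ) : ZMod 2) = 1 := by
      revert h0 h1
      generalize ((q.coeff 1 : ℤ) : ZMod 2) = u
      generalize ((q.coeff 0 : ℤ) : ZMod 2) = v
      revert u v
      decide
    -- reduction mod 2
    have hm : q.map (Int.castRingHom (ZMod 2)) ∣ (pz A).map (Int.castRingHom (ZMod 2)) :=
      Polynomial.map_dvd _ hdvd
    have hqm : q.map (Int.castRingHom (ZMod 2)) = X ^ 2 + X + 1 := by
      rw [hq2]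
      simp only [Polynomial.map_add, Polynomial.map_mul, Polynomial.map_pow, map_X, map_C,
        Int.coe_castRingHom, hu.1, hu.2, C_1, one_mul]
    have hA2 : ((A : ℤ) : ZMod 2) = 1 := by
      have : ((A : ℤ) : ZMod 2) = ((1 : ℤ) : ZMod 2) :=
        (ZMod.intCast_eq_intCast_iff _ _ _).mpr hodd
      simpa using this
    have hpm : (pz A).map (Int.castRingHom (ZMod 2)) = (X ^ 2 + X + 1) * (X ^ 4 + X) + 1 := by
      have h35 : (3 : ZMod 2) = 1 := by decide
      have h25 : (2 * 1 - 5 : ZMod 2) = 1 := by decide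
      simp only [pz, Polynomial.map_add, Polynomial.map_mul, Polynomial.map_pow, map_X, map_C,
        Int.coe_castRingHom, Int.cast_sub, Int.cast_mul, Int.cast_ofNat, hA2, h35, h25, C_1, one_mul,
        Polynomial.map_one]
      ring
    rw [hqm, hpm] at hm
    have h3 : (X ^ 2 + X + 1 : (ZMod 2)[X]) ∣ 1 := (dvd_add_right (dvd_mul_right _ _)).mp hm
    have h4 : (X ^ 2 + X + 1 : (ZMod 2)[X]).natDegree = 2 := by compute_degree!
    have := natDegree_eq_zero_of_isUnit (isUnit_of_dvd_one h3)
    omega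
  · rw [h] at hsum
    have hq3 : ∀ x : ℝ, aeval x q = x ^ 3 + q.coeff 2 * x ^ 2 + q.coeff 1 * x + q.coeff 0 := by
      intro x
      conv_lhs => rw [hsum]
      simp [Finset.sum_range_succ]
      ring
    have hcont : Continuous fun x : ℝ => aeval x q := by
      simp only [hq3]; fun_prop
    generalize (q.coeff 2 : ℝ) = a at hq3
    generalize (q.coeff 1 : ℝ) = b at hq3
    generalize (q.coeff 0 : ℝ) = c at hq3
    let N := 1 + |a| + |b| + |c|
    have a0 := abs_nonneg a
    have b0 := abs_nonneg b
    have c0 := abs_nonneg c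
    have hN : 1 ≤ N := by simp only [N]; linarith
    have hN2 : N ≤ N ^ 2 := by nlinarith
    have key : |a| * N ^ 2 + |b| * N + |c| ≤ N ^ 3 := by
      have e : N ^ 3 = N ^ 2 + |a| * N ^ 2 + |b| * N ^ 2 + |c| * N ^ 2 := by
        simp only [N]; ring
      rw [e]
      have := mul_le_mul_of_nonneg_left hN2 b0
      have : |c| * 1 ≤ |c| * N ^ 2 := mul_le_mul_of_nonneg_left (by linarith) c0
      nlinarith
    have l1 : aeval (-N) q ≤ (0 : ℝ) := by
      rw [hq3]
      have u1 : a * N ^ 2 ≤ |a| * N ^ 2 := mul_le_mul_of_nonneg_right (le_abs_self a) (by positivity)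
      have u2 : -b * N ≤ |b| * N := mul_le_mul_of_nonneg_right (neg_le_abs b) (by linarith)
      have u3 := le_abs_self c
      nlinarith
    have l2 : (0 : ℝ) ≤ aeval N q := by
      rw [hq3]
      have u1 : -a * N ^ 2 ≤ |a| * N ^ 2 := mul_le_mul_of_nonneg_right (neg_le_abs a) (by positivity)
      have u2 : -b * N ≤ |b| * N := mul_le_mul_of_nonneg_right (neg_le_abs b) (by linarith)
      have u3 := neg_le_abs c
      nlinarith
    obtain ⟨x, hx⟩ := mem_range_of_exists_le_of_exists_ge hcont ⟨_, l1⟩ ⟨_, l2⟩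
    exact hreal x hx


/-- The rational sextic. -/
noncomputable def pq (A : ℤ) : ℚ[X] := (pz A).map (algebraMap ℤ ℚ)

lemma pq_monic (A : ℤ) : (pq A).Monic := (pz_monic A).map _

lemma pq_natDegree (A : ℤ) : (pq A).natDegree = 6 := by
  rw [pq, (pz_monic A).natDegree_map, pz_natDegree]

lemma pq_irreducible (A : ℤ) (hA : 7 ≤ A) (hodd : A % 2 = 1) : Irreducible (pq A) :=
  (Polynomial.Monic.irreducible_iff_irreducible_map_fraction_map (pz_monic A)).mp
    (pz_irreducible_int A (by omega) hodd)

lemma aeval_pq {R : Type*} [CommRing R] [Algebra ℚ R] (A : ℤ) (x : R) :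
    aeval x (pq A) = aeval x (pz A) := by
  rw [pq, aeval_map_algebraMap]

section FieldFacts

variable {K : Type*} [Field K] {A : ℤ} {x : K}

lemma root_ne_zero (hx : aeval x (pz A) = 0) : x ≠ 0 := by
  rintro rfl
  rw [aeval_pz] at hx
  norm_num at hx

lemma root_add_one_ne_zero (hx : aeval x (pz A) = 0) : x + 1 ≠ 0 := by
  intro h
  rw [aeval_pz, eq_neg_of_add_eq_zero_left h] at hx
  norm_num at hx

lemma root_inv (hx : aeval x (pz A) = 0) : aeval x⁻¹ (pz A) = 0 := by
  have h0 := root_ne_zero hx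
  rw [aeval_pz] at hx ⊢
  field_simp
  linear_combination hx

lemma root_neg (hx : aeval x (pz A) = 0) : aeval (-1 - x) (pz A) = 0 := by
  rw [aeval_pz] at hx ⊢
  linear_combination hx

lemma pz_factor (hx : aeval x (pz A) = 0) [CharZero K] :
    (pz A).map (algebraMap ℤ K) = (X - C x) * (X - C x⁻¹) * (X - C (-1 - x)) *
      (X - C (-1 - x)⁻¹) * (X - C (-1 - x⁻¹)) * (X - C (-1 - x⁻¹)⁻¹) := by
  have h0 := root_ne_zero hx
  have h1 := root_add_one_ne_zero hx
  have h2 : -1 - x ≠ 0 := by intro h; apply h1; linear_combination -h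
  have h3 : -1 - x⁻¹ ≠ 0 := by
    intro h; apply h1; field_simp at h; linear_combination -h
  apply Polynomial.funext
  intro r
  rw [eval_map, ← aeval_def, aeval_pz]
  rw [aeval_pz] at hx
  simp only [eval_mul, eval_sub, eval_X, eval_C]
  have e3 : (-1 - x⁻¹)⁻¹ = - x / (x + 1) := by
    rw [inv_eq_iff_eq_inv]; field_simp; ring
  have e2 : (-1 - x)⁻¹ = - 1 / (x + 1) := by
    rw [inv_eq_iff_eq_inv]; field_simp; ring
  rw [e2, e3]
  have : (A : K) - 6 = - (x ^ 2 + x + 1) ^ 3 / (x ^ 2 * (x + 1) ^ 2) := by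
    field_simp
    linear_combination hx
  rw [this]
  field_simp
  ring

variable [CharZero K] [Algebra ℚ K]

lemma pq_minpoly (hA : 7 ≤ A) (hodd : A % 2 = 1) (hx : aeval x (pz A) = 0) :
    minpoly ℚ x = pq A :=
  (minpoly.eq_of_irreducible_of_monic (pq_irreducible A hA hodd)
    (by rw [aeval_pq, hx]) (pq_monic A)).symm

lemma root_integral (hx : aeval x (pz A) = 0) : IsIntegral ℚ x :=
  ⟨pq A, pq_monic A, by rw [← aeval_def, aeval_pq, hx]⟩

lemma pq_splits (hx : aeval x (pz A) = 0) : ((pq A).map (algebraMap ℚ K)).Splits := by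
  have : (pq A).map (algebraMap ℚ K) = (pz A).map (algebraMap ℤ K) := by
    rw [pq, Polynomial.map_map]
    congr 1
    exact RingHom.ext_int _ _
  rw [this, pz_factor hx]
  refine ((((Splits.mul ?_ ?_).mul ?_).mul ?_).mul ?_).mul ?_ <;> exact Splits.X_sub_C _

lemma field_splitting (hx : aeval x (pz A) = 0)
    (htop : IntermediateField.adjoin ℚ {x} = ⊤) : (pq A).IsSplittingField ℚ K := by
  refine ⟨pq_splits hx, ?_⟩
  have h1 : Algebra.adjoin ℚ {x} = ⊤ := by
    have := IntermediateField.adjoin_simple_toSubalgebra_of_isAlgebraic (root_integral hx).isAlgebraic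
    rw [← this, htop]; rfl
  rw [eq_top_iff, ← h1]
  apply Algebra.adjoin_mono
  rw [Set.singleton_subset_iff, mem_rootSet]
  exact ⟨(pq_monic A).ne_zero, by rw [aeval_pq, hx]⟩

lemma field_finrank (hA : 7 ≤ A) (hodd : A % 2 = 1) (hx : aeval x (pz A) = 0)
    (htop : IntermediateField.adjoin ℚ {x} = ⊤) : Module.finrank ℚ K = 6 := by
  rw [← IntermediateField.finrank_top', ← htop,
    IntermediateField.adjoin.finrank (root_integral hx), pq_minpoly hA hodd hx, pq_natDegree]

lemma field_galois (hA : 7 ≤ A) (hodd : A % 2 = 1) (hx : aeval x (pz A) = 0)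
    (htop : IntermediateField.adjoin ℚ {x} = ⊤) : IsGalois ℚ K := by
  have := field_splitting hx htop
  exact IsGalois.of_separable_splitting_field (p := pq A) (pq_irreducible A hA hodd).separable

lemma field_S3 (hA : 7 ≤ A) (hodd : A % 2 = 1) (hx : aeval x (pz A) = 0)
    (htop : IntermediateField.adjoin ℚ {x} = ⊤) :
    Nonempty ((K ≃ₐ[ℚ] K) ≃* Equiv.Perm (Fin 3)) := by
  have hgal := field_galois hA hodd hx htop
  have hfr := field_finrank hA hodd hx htop
  have hfd : FiniteDimensional ℚ K := Module.finite_of_finrank_pos (by omega)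
  have hconj : ∀ z : K, aeval z (pz A) = 0 → ∃ σ : K ≃ₐ[ℚ] K, σ x = z := by
    intro z hz
    have : IsConjRoot ℚ x z := by
      rw [IsConjRoot, pq_minpoly hA hodd hx, pq_minpoly hA hodd hz]
    obtain ⟨σ, h⟩ := isConjRoot_iff_exists_algEquiv.mp this.symm
    exact ⟨σ, h⟩
  obtain ⟨a, ha⟩ := hconj _ (root_inv hx)
  obtain ⟨b, hb⟩ := hconj _ (root_neg hx)
  have hext : ∀ σ τ : K ≃ₐ[ℚ] K, σ x = τ x → σ = τ := by
    intro σ τ h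
    have h2 : (σ : K →ₐ[ℚ] K) = (τ : K →ₐ[ℚ] K) := by
      have h1 : Algebra.adjoin ℚ {x} = ⊤ := by
        have := IntermediateField.adjoin_simple_toSubalgebra_of_isAlgebraic
          (root_integral hx).isAlgebraic
        rw [← this, htop]; rfl
      refine AlgHom.ext_of_adjoin_eq_top h1 ?_
      intro y hy
      rw [Set.mem_singleton_iff] at hy
      subst hy
      exact h
    ext t
    exact DFunLike.congr_fun h2 t
  refine mulEquiv_perm_of_card_six ?_ a b ?_ ?_
  · rw [IsGalois.card_aut_eq_finrank, hfr]
  · apply hext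
    rw [pow_two, AlgEquiv.mul_apply, ha, map_inv₀, ha, inv_inv]
    rfl
  · intro h
    have h2 := DFunLike.congr_fun h x
    rw [AlgEquiv.mul_apply, AlgEquiv.mul_apply, ha, hb, map_inv₀, hb, map_sub, map_neg, map_one,
      ha] at h2
    have h0 := root_ne_zero hx
    have h1 := root_add_one_ne_zero hx
    have h1' : -1 - x ≠ 0 := by intro h; apply h1; linear_combination -h
    have h3 : x ^ 2 + x + 1 = 0 := by
      field_simp at h2
      linear_combination h2
    rw [aeval_pz, h3] at hx
    have h4 : (A : K) - 6 ≠ 0 := by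
      have : ((A - 6 : ℤ) : K) ≠ 0 := Int.cast_ne_zero.mpr (by omega)
      push_cast at this; exact this
    have : ((A : K) - 6) * (x ^ 2 * (x + 1) ^ 2) ≠ 0 := by positivity
    apply this
    linear_combination hx

lemma field_imaginary (hA : 7 ≤ A) (hx : aeval x (pz A) = 0) (φ : K →+* ℂ) :
    (φ x).im ≠ 0 := by
  intro h
  have h1 : φ x = (((φ x).re : ℝ) : ℂ) := by
    apply Complex.ext <;> simp [h]
  have h2 : aeval (φ x) (pz A) = 0 := by
    have := congrArg φ hx
    rw [aeval_pz] at this ⊢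
    simpa [map_ofNat] using this
  have h3 := pz_real_pos A (by omega) (φ x).re
  rw [aeval_pz, h1] at h2
  rw [aeval_pz] at h3
  apply h3.ne'
  exact_mod_cast h2

end FieldFacts


lemma units_rank_two (K : Type*) [Field K] [NumberField K] (h6 : Module.finrank ℚ K = 6)
    (x : K) (hx : ∀ φ : K →+* ℂ, (φ x).im ≠ 0) : NumberField.Units.rank K = 2 := by
  classical
  have h : NumberField.InfinitePlace.nrRealPlaces K = 0 := by
    rw [NumberField.InfinitePlace.nrRealPlaces, Fintype.card_eq_zero_iff]
    refine ⟨fun w => ?_⟩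
    have hw := NumberField.InfinitePlace.isReal_iff.mp w.2
    apply hx w.1.embedding
    have := NumberField.ComplexEmbedding.isReal_iff.mp hw
    have h2 := DFunLike.congr_fun this x
    rw [NumberField.ComplexEmbedding.conjugate_coe_eq] at h2
    exact Complex.conj_eq_iff_im.mp h2
  have h2 := NumberField.InfinitePlace.card_add_two_mul_card_eq_rank K
  have h3 := NumberField.InfinitePlace.card_eq_nrRealPlaces_add_nrComplexPlaces K
  rw [NumberField.Units.rank, h3]
  omega

/-- The six linear forms. -/
def lin : Fin 6 → ℤ × ℤ := ![(1, -2), (1, 3), (2, -1), (3, 1), (2, 3), (3, 2)]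

/-- The six special elements. -/
def al {R : Type*} [CommRing R] (x : R) (i : Fin 6) : R := ((lin i).1 : R) * x + ((lin i).2 : R)

lemma prod_al {R : Type*} [CommRing R] {A : ℤ} {x : R} (hx : aeval x (pz A) = 0) :
    ∏ i, al x i = -((36 * A + 127 : ℤ) : R) * (x ^ 2 * (x + 1) ^ 2) := by
  rw [aeval_pz] at hx
  simp only [Fin.prod_univ_succ, al, lin]
  simp
  linear_combination 36 * hx

lemma det_lin : ∀ i j : Fin 6, i ≠ j →
    ((lin i).1 * (lin j).2 - (lin j).1 * (lin i).2) ∣ 840 := by decide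

lemma root_isUnit {R : Type*} [CommRing R] {A : ℤ} {x : R} (hx : aeval x (pz A) = 0) :
    IsUnit x ∧ IsUnit (x + 1) := by
  rw [aeval_pz] at hx
  constructor
  · refine IsUnit.of_mul_eq_one
      (-(x ^ 5 + 3 * x ^ 4 + A * x ^ 3 + (2 * A - 5) * x ^ 2 + A * x + 3)) ?_
    linear_combination - hx
  · refine IsUnit.of_mul_eq_one
      (-(x ^ 5 + 2 * x ^ 4 + (A - 2) * x ^ 3 + (A - 3) * x ^ 2 + 3 * x)) ?_
    linear_combination - hx

lemma al_coprime {R : Type*} [CommRing R] {A y : ℤ} {n : ℕ} {x : R} (hx : aeval x (pz A) = 0)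
    (hy : y ^ n = 36 * A + 127) (hcop : IsCoprime y 210) (i j : Fin 6) (hij : i ≠ j) :
    IsCoprime (al x i) (al x j) := by
  obtain ⟨hu1, hu2⟩ := root_isUnit hx
  have hprod := prod_al hx
  rw [← Finset.mul_prod_erase _ _ (Finset.mem_univ i)] at hprod
  set w := ∏ k ∈ Finset.univ.erase i, al x k
  obtain ⟨e, he⟩ : ∃ e : R, (x ^ 2 * (x + 1) ^ 2) * e = 1 :=
    ((hu1.pow 2).mul (hu2.pow 2)).exists_right_inv
  have h840 : IsCoprime (y ^ n) (840 : ℤ) := by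
    apply IsCoprime.pow_left
    have h2 : IsCoprime y (210 * 210 * 210) := (hcop.mul_right hcop).mul_right hcop
    exact h2.of_isCoprime_of_dvd_right (by norm_num)
  have hdet := h840.of_isCoprime_of_dvd_right (det_lin i j hij)
  obtain ⟨u, v, huv⟩ := hdet
  rw [← hy] at hprod
  have huv' := congrArg (Int.cast : ℤ → R) huv
  push_cast at huv' hprod
  refine ⟨-(u * w * e) - v * (lin j).1, v * (lin i).1, ?_⟩
  have e2 : al x i * (w * e) = - (y : R) ^ n := by
    rw [← mul_assoc, hprod]; linear_combination -(y : R) ^ n * he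
  rw [← huv']
  have : ((lin i).1 : R) * al x j - (lin j).1 * al x i =
      (lin i).1 * (lin j).2 - (lin j).1 * (lin i).2 := by
    simp only [al]; ring
  linear_combination -u * e2 + v * this

lemma al_ideal {R : Type*} [CommRing R] [IsDedekindDomain R] {A y : ℤ} {n : ℕ} {x : R}
    (hx : aeval x (pz A) = 0)
    (hy : y ^ n = 36 * A + 127) (hcop : IsCoprime y 210) (i : Fin 6) :
    ∃ J : Ideal R, J ^ n = Ideal.span {al x i} := by
  classical
  obtain ⟨hu1, hu2⟩ := root_isUnit hx
  have : NormalizedGCDMonoid (Ideal R) := inferInstance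
  have h := Finset.exists_eq_pow_of_mul_eq_pow_of_coprime (R := Ideal R) (n := n)
    (c := Ideal.span {(y : R)}) (s := Finset.univ) (f := fun i => Ideal.span {al x i}) (by
      intro i _ j _ hij
      rw [Ideal.isCoprime_span_singleton_iff]
      exact al_coprime hx hy hcop i j hij) (by
      rw [Ideal.prod_span_singleton, prod_al hx, Ideal.span_singleton_pow,
        Ideal.span_singleton_eq_span_singleton, ← hy]
      push_cast
      have hu : IsUnit (-(x ^ 2 * (x + 1) ^ 2)) := ((hu1.pow 2).mul (hu2.pow 2)).neg
      obtain ⟨u, hu⟩ := hu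
      refine Associated.symm ⟨u, ?_⟩
      rw [hu]; ring) i (Finset.mem_univ _)
  obtain ⟨d, hd⟩ := h
  exact ⟨d, hd.symm⟩


/-- `a` is a unit with residue `r` times a `p`-th power. -/
def PGood {l : ℕ} [Fact l.Prime] (p : ℕ) (a : ℚ_[l]) (r : ZMod l) : Prop :=
  ∃ (u : ℤ_[l]ˣ) (w : ℚ_[l]), w ≠ 0 ∧ a = ((u : ℤ_[l]) : ℚ_[l]) * w ^ p ∧
    r = PadicInt.toZMod (u : ℤ_[l])

section PGood

variable {l : ℕ} [Fact l.Prime] {p : ℕ}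

lemma PGood.mul {a b : ℚ_[l]} {r s : ZMod l} (h1 : PGood p a r) (h2 : PGood p b s) :
    PGood p (a * b) (r * s) := by
  obtain ⟨u, w, hw, rfl, rfl⟩ := h1
  obtain ⟨u', w', hw', rfl, rfl⟩ := h2
  refine ⟨u * u', w * w', mul_ne_zero hw hw', ?_, ?_⟩
  · push_cast; ring
  · simp

lemma PGood.one : PGood p (1 : ℚ_[l]) (1 : ZMod l) := ⟨1, 1, one_ne_zero, by simp, by simp⟩

lemma PGood.inv {a : ℚ_[l]} {r : ZMod l} (h1 : PGood p a r) : PGood p a⁻¹ r⁻¹ := by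
  obtain ⟨u, w, hw, rfl, rfl⟩ := h1
  refine ⟨u⁻¹, w⁻¹, inv_ne_zero hw, ?_, ?_⟩
  · rw [mul_inv, inv_pow]
    congr 1
    apply inv_eq_of_mul_eq_one_right
    rw [← PadicInt.coe_mul, Units.mul_inv, PadicInt.coe_one]
  · apply inv_eq_of_mul_eq_one_right
    rw [← map_mul, Units.mul_inv, map_one]

lemma PGood.zpow {a : ℚ_[l]} {r : ZMod l} (h1 : PGood p a r) (k : ℤ) : PGood p (a ^ k) (r ^ k) := by
  have hn : ∀ m : ℕ, PGood p (a ^ m) (r ^ m) := by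
    intro m
    induction m with
    | zero => simpa using PGood.one
    | succ m ih => rw [pow_succ, pow_succ]; exact ih.mul h1
  cases k with
  | ofNat m => simpa using hn m
  | negSucc m => rw [zpow_negSucc, zpow_negSucc]; exact (hn _).inv

lemma PGood.prod {ι : Type*} (s : Finset ι) {a : ι → ℚ_[l]} {r : ι → ZMod l}
    (h : ∀ i ∈ s, PGood p (a i) (r i)) : PGood p (∏ i ∈ s, a i) (∏ i ∈ s, r i) := by
  classical
  induction s using Finset.induction_on with
  | empty => simpa using PGood.one
  | insert i s hi ih =>
    rw [Finset.prod_insert hi, Finset.prod_insert hi]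
    exact (h i (Finset.mem_insert_self _ _)).mul
      (ih fun j hj => h j (Finset.mem_insert_of_mem hj))

lemma PGood.of_int {z : ℤ_[l]} {r : ZMod l} (h : PadicInt.toZMod z = r) (hr : r ≠ 0) :
    PGood p (z : ℚ_[l]) r := by
  have hu : IsUnit z := by
    rw [PadicInt.isUnit_iff]
    by_contra hne
    exact hr (h ▸ (padic_toZMod_eq_zero_iff z).mpr (lt_of_le_of_ne z.norm_le_one hne))
  obtain ⟨u, rfl⟩ := hu
  exact ⟨u, 1, one_ne_zero, by simp, h.symm⟩

lemma PGood.of_pow {a : ℚ_[l]} (ha : a ≠ 0) : PGood p (a ^ p) (1 : ZMod l) :=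
  ⟨1, a, ha, by simp, by simp⟩

lemma PGood.exists_root {a : ℚ_[l]} {r : ZMod l} (hp : p ≠ 0) (h : PGood p (a ^ p) r) :
    ∃ s : ZMod l, s ^ p = r := by
  obtain ⟨u, w, hw, he, rfl⟩ := h
  have h1 : (a / w) ^ p = ((u : ℤ_[l]) : ℚ_[l]) := by
    rw [div_pow, he]; field_simp
  have h2 : ‖a / w‖ ^ p = 1 := by
    rw [← norm_pow, h1, PadicInt.padic_norm_e_of_padicInt, PadicInt.norm_units]
  have h3 : ‖a / w‖ = 1 := (pow_eq_one_iff_of_nonneg (norm_nonneg _) hp).mp h2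
  obtain ⟨v, hv⟩ : ∃ v : ℤ_[l], (v : ℚ_[l]) = a / w := ⟨⟨a / w, h3.le⟩, rfl⟩
  refine ⟨PadicInt.toZMod v, ?_⟩
  rw [← map_pow]
  congr 1
  apply Subtype.ext
  rw [← h1, ← hv, PadicInt.coe_pow]

end PGood

lemma local_test {K : Type*} [Field K] {l : ℕ} [Fact l.Prime] (φ : K →+* ℚ_[l]) {A y : ℤ}
    {n p : ℕ} {x : K} (hx : aeval x (pz A) = 0) (hy : y ^ n = 36 * A + 127) (hy0 : y ≠ 0)
    (hp : p.Prime) (hpn : p ∣ n) (z : ℤ_[l]) (hz : φ x = z) (t : ZMod l)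
    (ht : PadicInt.toZMod z = t) (h0 : t ≠ 0) (h1 : t + 1 ≠ 0) (i0 : Fin 6)
    (r : Fin 6 → ZMod l) (hr : ∀ j, j ≠ i0 → r j = al t j) (hr0 : ∀ j, r j ≠ 0)
    (hrp : ∏ j, r j = - (t ^ 2 * (t + 1) ^ 2)) (a b : ℤ) (e : Fin 6 → ℤ) (β : K)
    (hβ : x ^ a * (x + 1) ^ b * ∏ j, al x j ^ e j = β ^ p) :
    ∃ s : ZMod l, s ^ p = t ^ a * (t + 1) ^ b * ∏ j, r j ^ e j := by
  have hal : ∀ j, φ (al x j) = ((al z j : ℤ_[l]) : ℚ_[l]) := by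
    intro j; simp [al, hz]
  have hal' : ∀ j, PadicInt.toZMod (al z j) = al t j := by
    intro j; simp [al, ht]
  have g0 : PGood p (φ x) t := by rw [hz]; exact PGood.of_int ht h0
  have g1 : PGood p (φ (x + 1)) (t + 1) := by
    have : φ (x + 1) = ((z + 1 : ℤ_[l]) : ℚ_[l]) := by simp [hz]
    rw [this]; exact PGood.of_int (by simp [ht]) h1
  have gj : ∀ j, j ≠ i0 → PGood p (φ (al x j)) (r j) := by
    intro j hj
    rw [hal]
    exact PGood.of_int (by rw [hal', hr j hj]) (hr0 j)
  have g2 : PGood p (φ (al x i0)) (r i0) := by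
    have hP := prod_al hx
    rw [← Finset.mul_prod_erase _ _ (Finset.mem_univ i0), ← hy] at hP
    rw [← Finset.mul_prod_erase _ _ (Finset.mem_univ i0)] at hrp
    have gE : PGood p (∏ j ∈ Finset.univ.erase i0, φ (al x j)) (∏ j ∈ Finset.univ.erase i0, r j) :=
      PGood.prod _ fun j hj => gj j (Finset.ne_of_mem_erase hj)
    have hE0 : ∏ j ∈ Finset.univ.erase i0, r j ≠ 0 := Finset.prod_ne_zero_iff.mpr fun j _ => hr0 j
    have hE1 : ∏ j ∈ Finset.univ.erase i0, φ (al x j) ≠ 0 := by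
      obtain ⟨u, w, hw, he, -⟩ := gE
      rw [he]
      refine mul_ne_zero ?_ (pow_ne_zero _ hw)
      rw [Ne, PadicInt.coe_eq_zero]
      exact u.ne_zero
    have gm : PGood p (-1 : ℚ_[l]) (-1 : ZMod l) := by
      have := PGood.of_int (p := p) (z := (-1 : ℤ_[l])) (r := -1) (by simp) (by simp)
      simpa using this
    obtain ⟨k, rfl⟩ := hpn
    have gy : PGood p (((y : ℚ_[l]) ^ k) ^ p) (1 : ZMod l) :=
      PGood.of_pow (pow_ne_zero _ (Int.cast_ne_zero.mpr hy0))
    have g3 := ((gm.mul gy).mul ((g0.zpow 2).mul (g1.zpow 2))).mul gE.inv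
    have hP' := congrArg φ hP
    simp only [map_mul, map_neg, map_prod, map_pow, map_intCast] at hP'
    convert g3 using 1
    · rw [← div_eq_mul_inv, eq_div_iff hE1, hP']
      push_cast
      simp only [map_pow, map_intCast, zpow_ofNat]
      ring
    · rw [← div_eq_mul_inv, eq_div_iff hE0, hrp]
      simp only [zpow_ofNat]
      ring
  have gall : ∀ j, PGood p (φ (al x j)) (r j) := by
    intro j
    by_cases hj : j = i0
    · rw [hj]; exact g2
    · exact gj j hj
  have gfin := ((g0.zpow a).mul (g1.zpow b)).mul
    (PGood.prod Finset.univ fun j _ => (gall j).zpow (e j))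
  have hβ' := congrArg φ hβ
  simp only [map_mul, map_zpow₀, map_prod, map_pow] at hβ'
  rw [hβ'] at gfin
  exact gfin.exists_root hp.ne_zero


lemma embedding_gen {F K L : Type*} [Field F] [Field K] [Field L] [Algebra F K] [Algebra F L]
    {x : K} (hIntegral : IsIntegral F x) (htop : IntermediateField.adjoin F {x} = ⊤) {z : L}
    (hroot : z ∈ (minpoly F x).aroots L) : ∃ φ : K →+* L, φ x = z := by
  let ψ := (IntermediateField.algHomAdjoinIntegralEquiv (K := L) F hIntegral).symm ⟨z, hroot⟩
  have hψ : ψ (IntermediateField.AdjoinSimple.gen F x) = z :=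
    IntermediateField.algHomAdjoinIntegralEquiv_symm_apply_gen F hIntegral ⟨z, hroot⟩
  have hmem : ∀ k : K, k ∈ IntermediateField.adjoin F {x} := by intro k; rw [htop]; trivial
  let ι : K →+* IntermediateField.adjoin F {x} :=
    { toFun := fun k => ⟨k, hmem k⟩
      map_one' := rfl
      map_mul' := fun _ _ => rfl
      map_zero' := rfl
      map_add' := fun _ _ => rfl }
  exact ⟨ψ.toRingHom.comp ι, hψ⟩

lemma exists_embedding {K : Type*} [Field K] [CharZero K] [Algebra ℚ K] {A : ℤ} {x : K}
    (hA : 7 ≤ A) (hodd : A % 2 = 1) (hx : aeval x (pz A) = 0)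
    (htop : IntermediateField.adjoin ℚ {x} = ⊤) {L : Type*} [Field L] [Algebra ℚ L] (z : L)
    (hz : aeval z (pz A) = 0) : ∃ φ : K →+* L, φ x = z := by
  refine embedding_gen (root_integral hx) htop ?_
  rw [pq_minpoly hA hodd hx, mem_aroots]
  exact ⟨(pq_monic A).ne_zero, by rw [aeval_pq, hz]⟩

section Roots

variable {l : ℕ} [Fact l.Prime] {A y : ℤ} {n : ℕ}

lemma zmod_ne_zero_of_coprime (hl : Nat.Coprime l 210) :
    (2 : ZMod l) ≠ 0 ∧ (3 : ZMod l) ≠ 0 ∧ (5 : ZMod l) ≠ 0 ∧ (7 : ZMod l) ≠ 0 := by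
  have key : ∀ m : ℕ, m ∣ 210 → m ≠ 1 → (m : ZMod l) ≠ 0 := by
    intro m hm h1 h
    rw [ZMod.natCast_eq_zero_iff] at h
    have hl1 : l = 1 := Nat.eq_one_of_dvd_coprimes hl dvd_rfl (h.trans hm)
    exact (Fact.out : l.Prime).one_lt.ne' hl1
  refine ⟨?_, ?_, ?_, ?_⟩
  · exact_mod_cast key 2 (by norm_num) (by norm_num)
  · exact_mod_cast key 3 (by norm_num) (by norm_num)
  · exact_mod_cast key 5 (by norm_num) (by norm_num)
  · exact_mod_cast key 7 (by norm_num) (by norm_num)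

lemma aeval_pz_deriv {R : Type*} [CommRing R] (A : ℤ) (x : R) : aeval x (derivative (pz A)) =
    3 * (x ^ 2 + x + 1) ^ 2 * (2 * x + 1) + (A - 6) * (2 * x * (x + 1) * (2 * x + 1)) := by
  simp [pz, map_ofNat]
  ring

lemma root_two (hl : Nat.Coprime l 210) (hy : y ^ n = 36 * A + 127) (hn : n ≠ 0)
    (hly : (l : ℤ) ∣ y) : ∃ z : ℤ_[l], aeval z (pz A) = 0 ∧ PadicInt.toZMod z = 2 := by
  obtain ⟨h2, h3, h5, h7⟩ := zmod_ne_zero_of_coprime hl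
  have hA : (36 * A + 127 : ZMod l) = 0 := by
    have : ((y ^ n : ℤ) : ZMod l) = 0 := by
      rw [ZMod.intCast_zmod_eq_zero_iff_dvd]
      exact hly.trans (dvd_pow_self _ hn)
    rw [hy] at this
    exact_mod_cast this
  apply padic_hensel
  · rw [aeval_pz]
    linear_combination hA
  · rw [aeval_pz_deriv]
    intro h
    have : (2 : ZMod l) ^ 3 * 3 * 5 * 7 ^ 2 = 0 := by
      linear_combination 36 * h - 60 * hA
    revert this
    simp [h2, h3, h5, h7]

lemma root_coe {z : ℤ_[l]} : aeval (z : ℚ_[l]) (pz A) = 0 ↔ aeval z (pz A) = 0 := by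
  rw [aeval_pz, aeval_pz, ← PadicInt.coe_eq_zero]
  push_cast
  rfl

lemma root_neg_int {z : ℤ_[l]} {t : ZMod l}
    (h : aeval z (pz A) = 0 ∧ PadicInt.toZMod z = t) :
    aeval (-1 - z) (pz A) = 0 ∧ PadicInt.toZMod (-1 - z) = -1 - t := by
  refine ⟨?_, by simp [h.2]⟩
  have := root_neg (root_coe.mpr h.1)
  rw [← root_coe]
  simpa using this

lemma root_inv_int {z : ℤ_[l]} {t : ZMod l}
    (h : aeval z (pz A) = 0 ∧ PadicInt.toZMod z = t) :
    ∃ w : ℤ_[l], aeval w (pz A) = 0 ∧ PadicInt.toZMod w = t⁻¹ := by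
  obtain ⟨w, hw⟩ := (root_isUnit h.1).1.exists_right_inv
  refine ⟨w, ?_, ?_⟩
  · have := root_inv (root_coe.mpr h.1)
    have hc : (z : ℚ_[l])⁻¹ = w := by
      apply inv_eq_of_mul_eq_one_right
      rw [← PadicInt.coe_mul, hw, PadicInt.coe_one]
    rw [hc] at this
    exact root_coe.mp this
  · symm
    apply inv_eq_of_mul_eq_one_right
    rw [← h.2, ← map_mul, hw, map_one]

end Roots

/-- Signed monomials in `2, 3, 5, 7`. -/
def VV (l : ℕ) [Fact l.Prime] (s a b c d : ℤ) : ZMod l := (-1) ^ s * 2 ^ a * 3 ^ b * 5 ^ c * 7 ^ d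

section VVsec

variable {l : ℕ} [Fact l.Prime]

lemma VV_mul (hl : Nat.Coprime l 210) (s a b c d s' a' b' c' d' : ℤ) :
    VV l s a b c d * VV l s' a' b' c' d' = VV l (s + s') (a + a') (b + b') (c + c') (d + d') := by
  obtain ⟨h2, h3, h5, h7⟩ := zmod_ne_zero_of_coprime hl
  have h1 : (-1 : ZMod l) ≠ 0 := by simp
  unfold VV
  rw [zpow_add₀ h1, zpow_add₀ h2, zpow_add₀ h3, zpow_add₀ h5, zpow_add₀ h7]
  ring

lemma VV_zpow (s a b c d k : ℤ) :
    VV l s a b c d ^ k = VV l (s * k) (a * k) (b * k) (c * k) (d * k) := by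
  unfold VV
  simp only [mul_zpow, zpow_mul]

lemma VV_ne_zero (hl : Nat.Coprime l 210) (s a b c d : ℤ) : VV l s a b c d ≠ 0 := by
  obtain ⟨h2, h3, h5, h7⟩ := zmod_ne_zero_of_coprime hl
  have h1 : (-1 : ZMod l) ≠ 0 := by simp
  unfold VV
  exact mul_ne_zero (mul_ne_zero (mul_ne_zero (mul_ne_zero (zpow_ne_zero _ h1)
    (zpow_ne_zero _ h2)) (zpow_ne_zero _ h3)) (zpow_ne_zero _ h5)) (zpow_ne_zero _ h7)

lemma VV_sign {p : ℕ} (hp : Odd p) {s a b c d : ℤ} {x : ZMod l} (h : x ^ p = VV l s a b c d) :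
    ∃ x : ZMod l, x ^ p = (2 : ZMod l) ^ a * 3 ^ b * 5 ^ c * 7 ^ d := by
  refine ⟨(-1) ^ s * x, ?_⟩
  have h1 : ((-1 : ZMod l) ^ s) ^ p = (-1) ^ s := by
    rw [← zpow_natCast, ← zpow_mul, mul_comm, zpow_mul, zpow_natCast, hp.neg_one_pow]
  have h2 : ((-1 : ZMod l) ^ s) * (-1) ^ s = 1 := by
    rw [← mul_zpow]; simp
  rw [mul_pow, h1, h]
  unfold VV
  linear_combination (2 : ZMod l) ^ a * 3 ^ b * 5 ^ c * 7 ^ d * h2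

end VVsec


/-- Signed monomials with vector exponents. -/
def WW (l : ℕ) [Fact l.Prime] (v : Fin 5 → ℤ) : ZMod l := VV l (v 0) (v 1) (v 2) (v 3) (v 4)

section WWsec

variable {l : ℕ} [Fact l.Prime]

lemma WW_mul (hl : Nat.Coprime l 210) (v w : Fin 5 → ℤ) : WW l v * WW l w = WW l (v + w) := by
  simp only [WW, VV_mul hl, Pi.add_apply]

lemma WW_zpow (v : Fin 5 → ℤ) (k : ℤ) : WW l v ^ k = WW l (k • v) := by
  simp only [WW, VV_zpow, Pi.smul_apply, smul_eq_mul, mul_comm]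

lemma WW_zero : WW l 0 = 1 := by simp [WW, VV]

lemma WW_prod (hl : Nat.Coprime l 210) {ι : Type*} (s : Finset ι) (v : ι → Fin 5 → ℤ) :
    ∏ i ∈ s, WW l (v i) = WW l (∑ i ∈ s, v i) := by
  classical
  induction s using Finset.induction_on with
  | empty => simp [WW_zero]
  | insert i s hi ih => rw [Finset.prod_insert hi, Finset.sum_insert hi, ih, WW_mul hl]

lemma WW_test {K : Type*} [Field K] [CharZero K] [Algebra ℚ K] {A y : ℤ}
    {n p : ℕ} {x : K} (hA : 7 ≤ A) (hodd : A % 2 = 1) (hx : aeval x (pz A) = 0)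
    (htop : IntermediateField.adjoin ℚ {x} = ⊤) (hy : y ^ n = 36 * A + 127) (hy0 : y ≠ 0)
    (hl : Nat.Coprime l 210) (hp : p.Prime) (hp2 : Odd p) (hpn : p ∣ n) (t : ZMod l)
    (hz : ∃ z : ℤ_[l], aeval z (pz A) = 0 ∧ PadicInt.toZMod z = t)
    (t0 t1 : Fin 5 → ℤ) (T : Fin 6 → Fin 5 → ℤ) (ht0 : t = WW l t0) (ht1 : t + 1 = WW l t1)
    (i0 : Fin 6) (hT : ∀ j, j ≠ i0 → WW l (T j) = al t j)
    (hsum : ∑ j, T j = t0 + t0 + t1 + t1 + ![1, 0, 0, 0, 0]) (a b : ℤ) (e : Fin 6 → ℤ) (β : K)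
    (hβ : x ^ a * (x + 1) ^ b * ∏ j, al x j ^ e j = β ^ p) (v : Fin 5 → ℤ)
    (hv : v = a • t0 + b • t1 + ∑ j, e j • T j) :
    ∃ s : ZMod l, s ^ p = (2 : ZMod l) ^ v 1 * 3 ^ v 2 * 5 ^ v 3 * 7 ^ v 4 := by
  obtain ⟨z, hz0, hzt⟩ := hz
  obtain ⟨φ, hφ⟩ := exists_embedding hA hodd hx htop (z : ℚ_[l]) (root_coe.mpr hz0)
  have hne : ∀ v, WW l v ≠ 0 := fun v => VV_ne_zero hl _ _ _ _ _
  obtain ⟨s, hs⟩ := local_test φ hx hy hy0 hp hpn z hφ t hzt (ht0 ▸ hne _) (ht1 ▸ hne _) i0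
    (fun j => WW l (T j)) hT (fun j => hne _) (by
      rw [WW_prod hl, hsum, ← WW_mul hl, ← WW_mul hl, ← WW_mul hl, ← WW_mul hl, ← ht0, ← ht1]
      simp [WW, VV]
      ring) a b e β hβ
  rw [ht1, ht0] at hs
  simp only [WW_zpow, WW_prod hl, WW_mul hl] at hs
  rw [← hv, WW] at hs
  exact VV_sign hp2 hs

end WWsec

lemma indep_prime {K : Type*} [Field K] [CharZero K] [Algebra ℚ K] {A y : ℤ}
    {n p : ℕ} {x : K} (hA : 7 ≤ A) (hodd : A % 2 = 1) (hx : aeval x (pz A) = 0)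
    (htop : IntermediateField.adjoin ℚ {x} = ⊤) (hy : y ^ n = 36 * A + 127) (hy0 : y ≠ 0)
    (hn : n ≠ 0) {M : ℕ} (hM : Nat.Coprime M 210) (hMy : (M : ℤ) ∣ y)
    (hp : p.Prime) (hp2 : Odd p) (hpn : p ∣ n)
    (hex : ∀ a b c d : ℤ, (∀ l, ∀ _ : Fact l.Prime, l ∣ M →
      ∃ x : ZMod l, x ^ p = (2 : ZMod l) ^ a * 3 ^ b * 5 ^ c * 7 ^ d) →
      (p : ℤ) ∣ a ∧ (p : ℤ) ∣ b ∧ (p : ℤ) ∣ c ∧ (p : ℤ) ∣ d)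
    (a b : ℤ) (e : Fin 6 → ℤ) (he : e 0 = 0) (β : K)
    (hβ : x ^ a * (x + 1) ^ b * ∏ j, al x j ^ e j = β ^ p) :
    (p : ℤ) ∣ a ∧ (p : ℤ) ∣ b ∧ ∀ j, (p : ℤ) ∣ e j := by
  have hcop : ∀ l, l ∣ M → Nat.Coprime l 210 := fun l hl => hM.coprime_dvd_left hl
  have hly : ∀ l, l ∣ M → (l : ℤ) ∣ y := fun l hl => (Int.natCast_dvd_natCast.mpr hl).trans hMy
  obtain ⟨ha1, ha2, ha3, ha4⟩ := hex (a + 3 * e 5) (b + e 2) (e 1) (e 3 + e 4) (by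
    intro l hl hlM
    obtain ⟨h2, h3, h5, h7⟩ := zmod_ne_zero_of_coprime (hcop l hlM)
    obtain ⟨s, hs⟩ := WW_test hA hodd hx htop hy hy0 (hcop l hlM) hp hp2 hpn (2 : ZMod l)
      (root_two (hcop l hlM) hy hn (hly l hlM)) ![0, 1, 0, 0, 0] ![0, 0, 1, 0, 0]
      ![![1, -1, 1, -1, -2], ![0, 0, 0, 1, 0], ![0, 0, 1, 0, 0], ![0, 0, 0, 0, 1],
        ![0, 0, 0, 0, 1], ![0, 3, 0, 0, 0]] (by simp [WW, VV]) (by simp [WW, VV]; norm_num) 0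
      (by
        intro j hj
        fin_cases j
        · exact absurd rfl hj
        all_goals (simp [WW, VV, al, lin, zpow_ofNat]; try norm_num))
      (by decide) a b e β hβ _ rfl
    refine ⟨s, hs.trans ?_⟩
    simp [Fin.sum_univ_six, he]
    ring_nf
    simp)
  obtain ⟨-, hb2, -, -⟩ := hex (b + 3 * e 3 - e 1) (a + e 1 + e 4) (- e 1) (e 2 + e 5 - 2 * e 1) (by
    intro l hl hlM
    obtain ⟨h2, h3, h5, h7⟩ := zmod_ne_zero_of_coprime (hcop l hlM)
    obtain ⟨z, hz⟩ := root_two (hcop l hlM) hy hn (hly l hlM)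
    obtain ⟨s, hs⟩ := WW_test hA hodd hx htop hy hy0 (hcop l hlM) hp hp2 hpn (-1 - 2 : ZMod l)
      ⟨_, root_neg_int hz⟩ ![1, 0, 1, 0, 0] ![1, 1, 0, 0, 0]
      ![![1, 0, 0, 1, 0], ![0, -1, 1, -1, -2], ![1, 0, 0, 0, 1], ![1, 3, 0, 0, 0],
        ![1, 0, 1, 0, 0], ![1, 0, 0, 0, 1]] (by simp [WW, VV]; norm_num)
      (by simp [WW, VV]; ring) 1
      (by
        intro j hj
        fin_cases j
        · simp [WW, VV, al, lin, zpow_ofNat]; try norm_num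
        · exact absurd rfl hj
        all_goals (simp [WW, VV, al, lin, zpow_ofNat]; try norm_num))
      (by decide) a b e β hβ _ rfl
    refine ⟨s, hs.trans ?_⟩
    simp [Fin.sum_univ_six, he]
    ring_nf)
  obtain ⟨-, -, hc3, -⟩ := hex (-a - b - e 1 - 2 * e 2 - e 3 + 2 * e 4 - e 5) (b + e 2) (e 3 - e 2)
      (e 1 - 2 * e 2 + e 5) (by
    intro l hl hlM
    obtain ⟨h2, h3, h5, h7⟩ := zmod_ne_zero_of_coprime (hcop l hlM)
    obtain ⟨z, hz⟩ := root_two (hcop l hlM) hy hn (hly l hlM)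
    obtain ⟨s, hs⟩ := WW_test hA hodd hx htop hy hy0 (hcop l hlM) hp hp2 hpn ((2 : ZMod l)⁻¹)
      (root_inv_int hz) ![0, -1, 0, 0, 0] ![0, -1, 1, 0, 0]
      ![![1, -1, 1, 0, 0], ![0, -1, 0, 0, 1], ![0, -2, 1, -1, -2], ![0, -1, 0, 1, 0],
        ![0, 2, 0, 0, 0], ![0, -1, 0, 0, 1]] (by simp [WW, VV])
      (by simp [WW, VV]; field_simp; norm_num) 2
      (by
        intro j hj
        fin_cases j
        · simp [WW, VV, al, lin, zpow_ofNat]; field_simp; norm_num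
        · simp [WW, VV, al, lin, zpow_ofNat]; field_simp; norm_num
        · exact absurd rfl hj
        all_goals (simp [WW, VV, al, lin, zpow_ofNat]; field_simp; try norm_num))
      (by decide) a b e β hβ _ rfl
    refine ⟨s, hs.trans ?_⟩
    simp [Fin.sum_univ_six, he]
    ring_nf)
  obtain ⟨-, -, hd3, -⟩ := hex (-a - b - e 1 + 2 * e 2 - e 3 - 2 * e 4 - e 5) (a + e 1 + e 4)
      (e 5 - e 4) (e 3 - 2 * e 4) (by
    intro l hl hlM
    obtain ⟨h2, h3, h5, h7⟩ := zmod_ne_zero_of_coprime (hcop l hlM)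
    obtain ⟨z, hz⟩ := root_two (hcop l hlM) hy hn (hly l hlM)
    obtain ⟨w, hw⟩ := root_inv_int hz
    obtain ⟨s, hs⟩ := WW_test hA hodd hx htop hy hy0 (hcop l hlM) hp hp2 hpn
      (-1 - (2 : ZMod l)⁻¹)
      ⟨_, root_neg_int hw⟩ ![1, -1, 1, 0, 0] ![1, -1, 0, 0, 0]
      ![![1, -1, 0, 0, 1], ![0, -1, 1, 0, 0], ![1, 2, 0, 0, 0], ![1, -1, 0, 0, 1],
        ![1, -2, 1, -1, -2], ![1, -1, 0, 1, 0]] (by simp [WW, VV]; field_simp; norm_num)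
      (by simp [WW, VV]; ring) 4
      (by
        intro j hj
        fin_cases j
        · simp [WW, VV, al, lin, zpow_ofNat]; field_simp; norm_num
        · simp [WW, VV, al, lin, zpow_ofNat]; field_simp; norm_num
        · simp [WW, VV, al, lin, zpow_ofNat]; field_simp; norm_num
        · simp [WW, VV, al, lin, zpow_ofNat]; field_simp; norm_num
        · exact absurd rfl hj
        · simp [WW, VV, al, lin, zpow_ofNat]; field_simp; norm_num)
      (by decide) a b e β hβ _ rfl
    refine ⟨s, hs.trans ?_⟩
    simp [Fin.sum_univ_six, he]
    ring_nf)
  have hp2' : IsCoprime (p : ℤ) 2 := by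
    rw [Int.isCoprime_iff_gcd_eq_one]
    exact Nat.coprime_two_right.mpr hp2
  have h4 : (p : ℤ) ∣ e 4 := by
    apply hp2'.dvd_of_dvd_mul_left
    have := (ha1.sub hb2 |>.sub (hd3.mul_left 3)).add ha3
    ring_nf at this
    rwa [mul_comm] at this
  have h5 : (p : ℤ) ∣ e 5 := by simpa using dvd_add hd3 h4
  have h3 : (p : ℤ) ∣ e 3 := by simpa using dvd_sub ha4 h4
  have h2 : (p : ℤ) ∣ e 2 := by simpa using dvd_sub h3 hc3
  have h0 : (p : ℤ) ∣ a := (dvd_add_left (h5.mul_left 3)).mp ha1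
  have h1 : (p : ℤ) ∣ b := (dvd_add_left h2).mp ha2
  refine ⟨h0, h1, fun j => ?_⟩
  fin_cases j
  · exact he ▸ dvd_zero _
  · exact ha3
  · exact h2
  · exact h3
  · exact h4
  · exact h5


lemma padic_no_unity {l : ℕ} [Fact l.Prime] {m : ℕ} (hm : Nat.Coprime (l * (l - 1)) m)
    (s : ℚ_[l]) (hs : s ^ m = 1) : s = 1 := by
  have hl := (Fact.out : l.Prime)
  have hm0 : m ≠ 0 := by
    rintro rfl
    rw [Nat.coprime_zero_right] at hm
    exact hl.one_lt.ne' (Nat.eq_one_of_mul_eq_one_right hm)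
  have h3 : ‖s‖ = 1 := by
    have : ‖s‖ ^ m = 1 := by rw [← norm_pow, hs, norm_one]
    exact (pow_eq_one_iff_of_nonneg (norm_nonneg _) hm0).mp this
  obtain ⟨v, hv⟩ : ∃ v : ℤ_[l], (v : ℚ_[l]) = s := ⟨⟨s, h3.le⟩, rfl⟩
  have hvm : v ^ m = 1 := by
    apply Subtype.ext
    rw [PadicInt.coe_pow, hv, hs, PadicInt.coe_one]
  have hr : (PadicInt.toZMod v) ^ m = 1 := by rw [← map_pow, hvm, map_one]
  have hr0 : PadicInt.toZMod v ≠ 0 := by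
    intro h
    rw [h, zero_pow hm0] at hr
    exact zero_ne_one hr
  have hr1 : PadicInt.toZMod v = 1 := by
    have h1 := orderOf_dvd_of_pow_eq_one hr
    have h2 := orderOf_dvd_of_pow_eq_one (ZMod.pow_card_sub_one_eq_one hr0)
    have := Nat.eq_one_of_dvd_coprimes (hm.coprime_dvd_left (Dvd.intro_left l rfl)) h2 h1
    exact orderOf_eq_one_iff.mp this
  have hg := mul_geom_sum v m
  rw [hvm, sub_self] at hg
  have hg0 : ∑ i ∈ Finset.range m, v ^ i ≠ 0 := by
    intro h
    have := congrArg PadicInt.toZMod h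
    simp only [map_sum, map_pow, hr1, one_pow, Finset.sum_const, Finset.card_range, nsmul_eq_mul,
      mul_one, map_zero] at this
    rw [ZMod.natCast_eq_zero_iff] at this
    have := Nat.eq_one_of_dvd_coprimes (hm.coprime_dvd_left (Dvd.intro _ rfl)) dvd_rfl this
    exact hl.one_lt.ne' this
  have := (mul_eq_zero.mp hg).resolve_right hg0
  rw [← hv, sub_eq_zero.mp this, PadicInt.coe_one]

lemma indep_comp {G ι : Type*} [CommGroup G] [Fintype ι] (α : ι → G) (n : ℕ) (hn : n ≠ 0)
    (hp : ∀ p : ℕ, p.Prime → p ∣ n → ∀ (f : ι → ℤ) (β : G), ∏ i, α i ^ f i = β ^ p →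
      ∀ i, (p : ℤ) ∣ f i)
    (hu : ∀ p : ℕ, p.Prime → p ∣ n → ∀ g : G, g ^ p = 1 → g = 1) (d : ℕ) :
    d ∣ n → ∀ (f : ι → ℤ) (β : G), ∏ i, α i ^ f i = β ^ d → ∀ i, (d : ℤ) ∣ f i := by
  induction d using induction_on_primes with
  | zero => intro h; exact absurd (zero_dvd_iff.mp h) hn
  | one => intros; simp
  | prime_mul p a hpp ih =>
    intro hd f β hβ
    have hpn : p ∣ n := (Dvd.intro _ rfl).trans hd
    have h1 := hp p hpp hpn f (β ^ a) (by rw [hβ, mul_comm, pow_mul])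
    choose f' hf' using h1
    have h2 : (∏ i, α i ^ f' i) ^ p = (β ^ a) ^ p := by
      rw [← pow_mul, mul_comm a, ← hβ, ← Finset.prod_pow]
      refine Finset.prod_congr rfl fun i _ => ?_
      rw [hf' i, mul_comm, zpow_mul, zpow_natCast]
    have h3 : ∏ i, α i ^ f' i = β ^ a := by
      have := hu p hpp hpn ((∏ i, α i ^ f' i) / β ^ a) (by rw [div_pow, h2, div_self'])
      exact div_eq_one.mp this
    intro i
    rw [hf' i, Nat.cast_mul]
    exact mul_dvd_mul_left _ (ih ((Dvd.intro_left _ rfl).trans hd) f' β h3 i)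

open nonZeroDivisors in
lemma rank_five (K : Type*) [Field K] [NumberField K] {A y : ℤ}
    {n : ℕ} {x : K} (hA : 7 ≤ A) (hodd : A % 2 = 1) (hx : aeval x (pz A) = 0)
    (htop : IntermediateField.adjoin ℚ {x} = ⊤) (hy : y ^ n = 36 * A + 127) (hy0 : y ≠ 0)
    (hn : 1 < n) (hn2 : Odd n) {M : ℕ} (hM : Nat.Coprime M 210) (hMy : (M : ℤ) ∣ y)
    (hcop : IsCoprime y 210)
    (hl : ∃ l : ℕ, l.Prime ∧ l ∣ M ∧ Nat.Coprime (l * (l - 1)) n)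
    (hex : ∀ p : ℕ, p.Prime → p ∣ n → ∀ a b c d : ℤ, (∀ l, ∀ _ : Fact l.Prime, l ∣ M →
      ∃ x : ZMod l, x ^ p = (2 : ZMod l) ^ a * 3 ^ b * 5 ^ c * 7 ^ d) →
      (p : ℤ) ∣ a ∧ (p : ℤ) ∣ b ∧ (p : ℤ) ∣ c ∧ (p : ℤ) ∣ d) :
    HasZModRankGE (ClassGroup (𝓞 K)) n 5 := by
  have hn0 : n ≠ 0 := by omega
  -- roots of unity
  have hunity : ∀ m : ℕ, m ∣ n → ∀ s : K, s ^ m = 1 → s = 1 := by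
    obtain ⟨l, hlp, hlM, hlc⟩ := hl
    haveI : Fact l.Prime := ⟨hlp⟩
    obtain ⟨z, hz, -⟩ := root_two (hM.coprime_dvd_left hlM) hy hn0
      ((Int.natCast_dvd_natCast.mpr hlM).trans hMy)
    obtain ⟨φ, -⟩ := exists_embedding hA hodd hx htop (z : ℚ_[l]) (root_coe.mpr hz)
    intro m hm s hs
    apply φ.injective
    rw [map_one]
    exact padic_no_unity (hlc.coprime_dvd_right hm) _ (by rw [← map_pow, hs, map_one])
  have hux : ∀ m : ℕ, m ∣ n → ∀ s : Kˣ, s ^ m = 1 → s = 1 := by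
    intro m hm s hs
    apply Units.ext
    exact hunity m hm s (by rw [← Units.val_pow_eq_pow_val, hs, Units.val_one])
  -- nonvanishing
  have hx0 := root_ne_zero hx
  have hx1 := root_add_one_ne_zero hx
  have hal0 : ∀ j, al x j ≠ 0 := by
    have := prod_al hx
    have h2 : ∏ j, al x j ≠ 0 := by
      rw [this, ← hy]
      refine mul_ne_zero (neg_ne_zero.mpr ?_) (mul_ne_zero (pow_ne_zero _ hx0) (pow_ne_zero _ hx1))
      exact_mod_cast pow_ne_zero n hy0
    intro j
    exact Finset.prod_ne_zero_iff.mp h2 j (Finset.mem_univ _)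
  -- the integral root
  have hxint : IsIntegral ℤ x := ⟨pz A, pz_monic A, by rw [← aeval_def]; exact hx⟩
  obtain ⟨X0, hX0⟩ : ∃ X0 : 𝓞 K, algebraMap (𝓞 K) K X0 = x :=
    ⟨⟨x, hxint⟩, rfl⟩
  have hX : aeval X0 (pz A) = 0 := by
    apply FaithfulSMul.algebraMap_injective (𝓞 K) K
    rw [← aeval_algebraMap_apply, hX0, hx, map_zero]
  obtain ⟨hU0, hU1⟩ := root_isUnit hX
  have halX : ∀ j, algebraMap (𝓞 K) K (al X0 j) = al x j := by
    intro j; simp [al, hX0]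
  have halX0 : ∀ j, al X0 j ≠ 0 := by
    intro j h
    apply hal0 j
    rw [← halX, h, map_zero]
  let α : Fin 7 → Kˣ := Fin.cons (Units.mk0 x hx0) (Fin.cons (Units.mk0 (x + 1) hx1)
    (fun k : Fin 5 => Units.mk0 (al x k.succ) (hal0 _)))
  have hunitI : ∀ (v : 𝓞 K) (hv : IsUnit v) (u : Kˣ), (u : K) = algebraMap (𝓞 K) K v →
      toPrincipalIdeal (𝓞 K) K u = 1 := by
    intro v hv u huv
    apply Units.ext
    rw [coe_toPrincipalIdeal, huv, ← FractionalIdeal.coeIdeal_span_singleton,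
      Ideal.span_singleton_eq_top.mpr hv]
    simp
  have hIex : ∀ i, ∃ I : (FractionalIdeal (𝓞 K)⁰ K)ˣ, I ^ n = toPrincipalIdeal (𝓞 K) K (α i) := by
    intro i
    refine Fin.cases ?_ (fun i => Fin.cases ?_ (fun k => ?_) i) i
    · exact ⟨1, by rw [one_pow]; exact (hunitI X0 hU0 _ hX0.symm).symm⟩
    · exact ⟨1, by rw [one_pow]; exact (hunitI (X0 + 1) hU1 _ (by simp [α, hX0])).symm⟩
    · obtain ⟨J, hJ⟩ := al_ideal hX hy hcop k.succ
      have hJ0 : J ≠ 0 := by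
        rintro rfl
        rw [zero_pow hn0, eq_comm, Ideal.zero_eq_bot, Ideal.span_singleton_eq_bot] at hJ
        exact halX0 _ hJ
      refine ⟨FractionalIdeal.mk0 K ⟨J, mem_nonZeroDivisors_of_ne_zero hJ0⟩, ?_⟩
      apply Units.ext
      rw [coe_toPrincipalIdeal, Units.val_pow_eq_pow_val, FractionalIdeal.coe_mk0,
        ← FractionalIdeal.coeIdeal_pow, hJ, FractionalIdeal.coeIdeal_span_singleton, halX]
      simp [α]
  choose I hI using hIex
  refine rank_of_data K n (units_rank_two K (field_finrank hA hodd hx htop) x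
    (field_imaginary hA hx)) ?_ α I hI ?_
  · -- torsion
    intro ζ hζ
    have hinj : Function.Injective (fun t : NumberField.Units.torsion K => t ^ n) := by
      intro s t hst
      have h1 : (s / t) ^ n = 1 := by
        simp only at hst
        rw [div_pow, hst, div_self']
      have h2 : (((s / t : NumberField.Units.torsion K) : (𝓞 K)ˣ) : K) = 1 := by
        apply hunity n dvd_rfl
        have := congrArg (fun t : NumberField.Units.torsion K => (((t : (𝓞 K)ˣ) : 𝓞 K) : K)) h1
        simpa using this
      have h3 : s / t = 1 := by
        apply Subtype.ext
        apply NumberField.Units.coe_injective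
        simpa using h2
      exact div_eq_one.mp h3
    obtain ⟨ξ, hξ⟩ := Finite.surjective_of_injective hinj ⟨ζ, hζ⟩
    exact ⟨ξ, by simpa using congrArg Subtype.val hξ⟩
  · intro f β hβ
    refine indep_comp α n hn0 ?_ (fun p _ hpn => hux p hpn) n dvd_rfl f β hβ
    intro p hp hpn f β hβ
    have hp2 : Odd p := hn2.of_dvd_nat hpn
    have hβ' : x ^ f 0 * (x + 1) ^ f 1 * ∏ j, al x j ^ (Fin.cons 0 (fun k : Fin 5 => f k.succ.succ) :
        Fin 6 → ℤ) j = (β : K) ^ p := by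
      have := congrArg (Units.val) hβ
      rw [Fin.prod_univ_succ, Fin.prod_univ_succ] at this
      rw [Fin.prod_univ_succ]
      simp only [α, Fin.cons_zero, Fin.cons_succ] at this ⊢
      simp at this
      rw [← this]
      simp [mul_assoc]
    obtain ⟨h0, h1, h2⟩ := indep_prime hA hodd hx htop hy hy0 hn0 hM hMy hp hp2 hpn
      (hex p hp hpn) (f 0) (f 1) _ rfl (β : K) hβ'
    intro i
    refine Fin.cases h0 (fun i => Fin.cases h1 (fun k => ?_) i) i
    have := h2 k.succ
    simpa using this


/-- The admissible values of `y`. -/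
def GoodY (M y : ℕ) : Prop := y % 72 = 19 ∧ y % 35 = 1 ∧ M ∣ y

lemma GoodY.facts {M y n : ℕ} (h : GoodY M y) (hn : 1 < n) (hodd : Odd n) :
    ∃ A : ℤ, (y : ℤ) ^ n = 36 * A + 127 ∧ 7 ≤ A ∧ A % 2 = 1 ∧ IsCoprime (y : ℤ) 210 := by
  obtain ⟨h1, h2, -⟩ := h
  have e1 : ((y : ℤ) ^ n) % 72 = 19 := by
    obtain ⟨k, rfl⟩ := hodd
    have hy : (y : ℤ) ≡ 19 [ZMOD 72] := by
      show (y : ℤ) % 72 = 19 % 72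
      omega
    have h3 : (y : ℤ) ^ (2 * k + 1) ≡ 19 ^ (2 * k + 1) [ZMOD 72] := hy.pow _
    have h4 : (19 : ℤ) ^ (2 * k + 1) ≡ 19 [ZMOD 72] := by
      rw [pow_succ, pow_mul]
      have h5 : (19 : ℤ) ^ 2 ≡ 1 [ZMOD 72] := by decide
      simpa using (h5.pow k).mul_right 19
    exact h3.trans h4
  have h19 : 19 ≤ y := by omega
  have e2 : (19 : ℤ) ^ 3 ≤ (y : ℤ) ^ n := by
    have hn3 : 3 ≤ n := by
      obtain ⟨k, rfl⟩ := hodd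
      omega
    calc (19 : ℤ) ^ 3 ≤ (y : ℤ) ^ 3 := pow_le_pow_left₀ (by norm_num) (by exact_mod_cast h19) 3
      _ ≤ (y : ℤ) ^ n := pow_le_pow_right₀ (by exact_mod_cast (by omega : 1 ≤ y)) hn3
  norm_num at e2
  refine ⟨((y : ℤ) ^ n - 127) / 36, by omega, by omega, by omega, ?_⟩
  refine ⟨1, -((y : ℤ) / 210), ?_⟩
  omega

lemma good_step (n M : ℕ) (hn : 1 < n) (hodd : Odd n) (hM0 : 0 < M) (hM : Nat.Coprime M 210)
    (F : Finset ℕ) (hF : ∀ x ∈ F, GoodY M x) : ∃ y, GoodY M y ∧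
      ∀ x ∈ F, ¬ IsSquare ((100 - (x : ℤ) ^ n) * (100 - (y : ℤ) ^ n)) := by
  obtain ⟨q, hqB, hq, hqn⟩ := Nat.forall_exists_prime_gt_and_modEq
    (∑ x ∈ F, x ^ n + 2520 * M + 100 + n) (q := n) (a := 2) (by omega)
    (Nat.coprime_two_left.mpr hodd)
  have : Fact q.Prime := ⟨hq⟩
  have hq0 := hq.pos
  have hqsub : ∀ m, 0 < m → m < q → Nat.Coprime m q := fun m h1 h2 =>
    (hq.coprime_iff_not_dvd.mpr fun h => absurd (Nat.le_of_dvd h1 h) (by omega)).symm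
  have hc100 : Nat.Coprime (100 + q) (q ^ 2) := by
    apply Nat.Coprime.pow_right
    simpa using hqsub 100 (by norm_num) (by omega)
  have hcard : (Nat.card (ZMod (q ^ 2))ˣ).Coprime n := by
    have : NeZero (q ^ 2) := ⟨pow_ne_zero _ hq.ne_zero⟩
    rw [Nat.card_eq_fintype_card, ZMod.card_units_eq_totient, Nat.totient_prime_pow hq (by norm_num)]
    apply Nat.Coprime.mul_left
    · simpa using (hqsub n (by omega) (by omega)).symm
    · have h1 : q - 1 ≡ 1 [MOD n] := by
        apply Nat.ModEq.add_right_cancel' 1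
        rw [Nat.sub_add_cancel hq.one_le]
        exact hqn
      rw [Nat.coprime_iff_gcd_eq_one, h1.gcd_eq]
      simp
  obtain ⟨u, hu⟩ := (powCoprime hcard).surjective (ZMod.unitOfCoprime _ hc100)
  rw [powCoprime_apply] at hu
  have : NeZero (q ^ 2) := ⟨pow_ne_zero _ hq.ne_zero⟩
  have hu' : ((u : ZMod (q ^ 2)).val : ZMod (q ^ 2)) ^ n = ((100 + q : ℕ) : ZMod (q ^ 2)) := by
    have := congrArg Units.val hu
    simpa using this
  -- CRT
  have hMq : Nat.Coprime M (q ^ 2) := Nat.Coprime.pow_right _ (hqsub M hM0 (by omega))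
  have h2520 : Nat.Coprime 2520 M := by
    have h210 := hM.symm
    have : Nat.Coprime (210 ^ 3) M := h210.pow_left 3
    exact this.coprime_dvd_left (by norm_num)
  have hc2 : Nat.Coprime 2520 (q ^ 2) :=
    Nat.Coprime.pow_right _ (hqsub 2520 (by norm_num) (by omega))
  obtain ⟨y1, hy1, hy1'⟩ := Nat.chineseRemainder hMq 0 (u : ZMod (q ^ 2)).val
  obtain ⟨y, hy, hy'⟩ := Nat.chineseRemainder (Nat.Coprime.mul_right h2520 hc2) 1891 y1
  have hyq : y ≡ (u : ZMod (q ^ 2)).val [MOD q ^ 2] := (hy'.of_mul_left M).trans hy1'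
  have hyM : M ∣ y := (Nat.modEq_zero_iff_dvd).mp ((hy'.of_mul_right (q ^ 2)).trans hy1)
  refine ⟨y, ⟨?_, ?_, hyM⟩, ?_⟩
  · have : y % 2520 = 1891 % 2520 := hy
    omega
  · have : y % 2520 = 1891 % 2520 := hy
    omega
  intro x hx ⟨m, hm⟩
  have hdiv : ((q ^ 2 : ℕ) : ℤ) ∣ (y : ℤ) ^ n - (100 + q) := by
    rw [← ZMod.intCast_zmod_eq_zero_iff_dvd]
    have h1 : (y : ZMod (q ^ 2)) = ((u : ZMod (q ^ 2)).val : ZMod (q ^ 2)) :=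
      (ZMod.natCast_eq_natCast_iff _ _ _).mpr hyq
    push_cast
    rw [h1, hu']
    push_cast
    ring
  obtain ⟨k, hk⟩ := hdiv
  push_cast at hk
  have hd : 100 - (y : ℤ) ^ n = q * (-1 - q * k) := by linear_combination - hk
  have hqp : Prime (q : ℤ) := Nat.prime_iff_prime_int.mp hq
  rw [hd] at hm
  have hqm : (q : ℤ) ∣ m := by
    have : (q : ℤ) ∣ m * m := ⟨(100 - (x : ℤ) ^ n) * (-1 - q * k), by rw [← hm]; ring⟩
    exact (hqp.dvd_or_dvd this).elim id id
  obtain ⟨m', rfl⟩ := hqm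
  have h3 : (100 - (x : ℤ) ^ n) * (-1 - q * k) = q * (m' * m') := by
    apply mul_left_cancel₀ hqp.ne_zero
    linear_combination hm
  rcases hqp.dvd_or_dvd (Dvd.intro _ h3.symm) with h | h
  · obtain ⟨A, hA, hA7, -⟩ := (hF x hx).facts hn hodd
    have h5 : (q : ℤ) ∣ (x : ℤ) ^ n - 100 := by rw [← dvd_neg]; simpa using h
    have h6 := Int.le_of_dvd (by omega) h5
    have h7 : x ^ n ≤ ∑ x ∈ F, x ^ n :=
      Finset.single_le_sum (f := fun x => x ^ n) (fun _ _ => Nat.zero_le _) hx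
    have h8 : (x : ℤ) ^ n = ((x ^ n : ℕ) : ℤ) := by push_cast; rfl
    rw [h8] at h6
    omega
  · have h9 : (q : ℤ) ∣ 1 := by
      have := dvd_add h (Dvd.intro k rfl : (q : ℤ) ∣ q * k)
      simpa using this
    exact hqp.not_unit (isUnit_of_dvd_one h9)


lemma gen_root {K : IntermediateField ℚ ℂ} {A : ℤ} (x : K) (h : aeval (x : ℂ) (pz A) = 0) :
    aeval x (pz A) = 0 := by
  rw [aeval_pz] at h ⊢
  apply Subtype.ext
  push_cast
  exact h

lemma gen_top_gen {F E : Type*} [Field F] [Field E] [Algebra F E] (θ : E) :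
    IntermediateField.adjoin F {(⟨θ, IntermediateField.mem_adjoin_simple_self F θ⟩ :
      IntermediateField.adjoin F {θ})} = ⊤ := by
  apply IntermediateField.lift_injective
  rw [IntermediateField.lift_adjoin_simple, IntermediateField.lift_top]

lemma top_instance {K : Type*} [Field K] (i j : Algebra ℚ K) (x : K)
    (h : @IntermediateField.adjoin ℚ _ K _ i {x} = ⊤) :
    @IntermediateField.adjoin ℚ _ K _ j {x} = ⊤ := by
  obtain rfl : i = j := Subsingleton.elim _ _
  exact h

lemma gen_top (θ : ℂ) : IntermediateField.adjoin ℚ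
    {(⟨θ, IntermediateField.mem_adjoin_simple_self ℚ θ⟩ : IntermediateField.adjoin ℚ {θ})} = ⊤ :=
  top_instance _ _ _ (gen_top_gen (F := ℚ) θ)

lemma root_mem {A : ℤ} {θ θ' : ℂ} (h : aeval θ (pz A) = 0) (h' : aeval θ' (pz A) = 0) :
    θ' ∈ IntermediateField.adjoin ℚ {θ} := by
  have hθ := IntermediateField.mem_adjoin_simple_self ℚ θ
  set L := IntermediateField.adjoin ℚ {θ}
  have hf := congrArg (eval θ') (pz_factor h)
  rw [eval_map, ← aeval_def, h'] at hf
  simp only [eval_mul, eval_sub, eval_X, eval_C] at hf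
  replace hf := hf.symm
  simp only [mul_eq_zero, sub_eq_zero] at hf
  have h1 : (1 : ℂ) ∈ L := one_mem L
  have h2 : -1 - θ ∈ L := sub_mem (neg_mem h1) hθ
  have h3 : -1 - θ⁻¹ ∈ L := sub_mem (neg_mem h1) (inv_mem hθ)
  rcases hf with ((((h | h) | h) | h) | h) | h <;> rw [h]
  · exact hθ
  · exact inv_mem hθ
  · exact h2
  · exact inv_mem h2
  · exact h3
  · exact inv_mem h3

lemma adjoin_le_of_hom {A : ℤ} {θ : ℂ} (h : aeval θ (pz A) = 0) (K' : IntermediateField ℚ ℂ)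
    (σ : IntermediateField.adjoin ℚ {θ} →+* K') : IntermediateField.adjoin ℚ {θ} ≤ K' := by
  have hg := gen_root (K := IntermediateField.adjoin ℚ {θ})
    ⟨θ, IntermediateField.mem_adjoin_simple_self ℚ θ⟩ h
  set g : IntermediateField.adjoin ℚ {θ} := ⟨θ, IntermediateField.mem_adjoin_simple_self ℚ θ⟩
  have hr : aeval ((σ g : K') : ℂ) (pz A) = 0 := by
    rw [aeval_pz] at hg ⊢
    have := congrArg (fun t => ((σ t : K') : ℂ)) hg
    have h6 : ((6 : K') : ℂ) = 6 := rfl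
    simpa [map_ofNat, h6] using this
  have h1 : IntermediateField.adjoin ℚ {((σ g : K') : ℂ)} ≤ K' := by
    rw [IntermediateField.adjoin_simple_le_iff]
    exact (σ g).2
  refine le_trans ?_ h1
  rw [IntermediateField.adjoin_simple_le_iff]
  exact root_mem hr h

lemma sqrt_mem {K : Type*} [Field K] [CharZero K] {A Y : ℤ} {x : K} (hx : aeval x (pz A) = 0)
    (hY : Y = 36 * A + 127) : ∃ s : K, s ^ 2 = ((100 - Y : ℤ) : K) := by
  have h0 := root_ne_zero hx
  have h1 := root_add_one_ne_zero hx
  refine ⟨3 * ((x - 1) * (x + 2) * (2 * x + 1)) / (x * (x + 1)), ?_⟩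
  rw [aeval_pz] at hx
  rw [hY]
  push_cast
  field_simp
  linear_combination 36 * hx

lemma char_square {K : Type*} [Field K] [Algebra ℚ K] [FiniteDimensional ℚ K] [IsGalois ℚ K]
    {d e : ℤ} {s t : K} (hs : s ^ 2 = (d : K)) (ht : t ^ 2 = (e : K))
    (h : ∀ σ : K ≃ₐ[ℚ] K, σ s = s ↔ σ t = t) : IsSquare (d * e) := by
  have hfix : ∀ σ : K ≃ₐ[ℚ] K, σ (s * t) = s * t := by
    intro σ
    have h1 : σ s = s ∨ σ s = - s := by
      apply sq_eq_sq_iff_eq_or_eq_neg.mp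
      rw [← map_pow, hs, map_intCast]
    have h2 : σ t = t ∨ σ t = - t := by
      apply sq_eq_sq_iff_eq_or_eq_neg.mp
      rw [← map_pow, ht, map_intCast]
    rw [map_mul]
    by_cases hc : σ s = s
    · rw [hc, (h σ).mp hc]
    · rw [h1.resolve_left hc, h2.resolve_left (fun h' => hc ((h σ).mpr h'))]
      ring
  obtain ⟨r, hr⟩ := (IsGalois.mem_range_algebraMap_iff_fixed (s * t)).mpr hfix
  rw [← Rat.isSquare_intCast_iff]
  refine ⟨r, ?_⟩
  apply (algebraMap ℚ K).injective
  rw [map_mul, hr, map_intCast]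
  push_cast
  rw [← hs, ← ht]
  ring

lemma rank_five' (K : Type*) [Field K] [CharZero K] [i : Algebra ℚ K] {A y : ℤ}
    {n : ℕ} {x : K} (hA : 7 ≤ A) (hodd : A % 2 = 1) (hx : aeval x (pz A) = 0)
    (htop : IntermediateField.adjoin ℚ {x} = ⊤) (hy : y ^ n = 36 * A + 127) (hy0 : y ≠ 0)
    (hn : 1 < n) (hn2 : Odd n) {M : ℕ} (hM : Nat.Coprime M 210) (hMy : (M : ℤ) ∣ y)
    (hcop : IsCoprime y 210)
    (hl : ∃ l : ℕ, l.Prime ∧ l ∣ M ∧ Nat.Coprime (l * (l - 1)) n)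
    (hex : ∀ p : ℕ, p.Prime → p ∣ n → ∀ a b c d : ℤ, (∀ l, ∀ _ : Fact l.Prime, l ∣ M →
      ∃ x : ZMod l, x ^ p = (2 : ZMod l) ^ a * 3 ^ b * 5 ^ c * 7 ^ d) →
      (p : ℤ) ∣ a ∧ (p : ℤ) ∣ b ∧ (p : ℤ) ∣ c ∧ (p : ℤ) ∣ d) :
    NumberField K ∧ HasZModRankGE (ClassGroup (𝓞 K)) n 5 := by
  have hfd : FiniteDimensional ℚ K :=
    Module.finite_of_finrank_pos (by rw [field_finrank hA hodd hx htop]; norm_num)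
  obtain rfl : i = DivisionRing.toRatAlgebra := Subsingleton.elim _ _
  have hNF : NumberField K := { to_charZero := inferInstance, to_finiteDimensional := hfd }
  exact ⟨hNF, rank_five K hA hodd hx htop hy hy0 hn hn2 hM hMy hcop hl hex⟩


lemma stmt_poly {A : ℤ} {y n : ℕ} (h : (y : ℤ) ^ n = 36 * A + 127) :
    (X ^ 6 + C 3 * X ^ 5 + C (((y : ℚ) ^ n - 127) / 36) * X ^ 4 +
      C (((y : ℚ) ^ n - 217) / 18) * X ^ 3 + C (((y : ℚ) ^ n - 127) / 36) * X ^ 2 +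
      C 3 * X + 1 : ℚ[X]) = pq A := by
  have h' : (y : ℚ) ^ n = 36 * A + 127 := by exact_mod_cast h
  have e1 : ((y : ℚ) ^ n - 127) / 36 = ((A : ℤ) : ℚ) := by rw [h']; ring
  have e2 : ((y : ℚ) ^ n - 217) / 18 = ((2 * A - 5 : ℤ) : ℚ) := by rw [h']; push_cast; ring
  rw [e1, e2, pq, pz]
  simp only [Polynomial.map_add, Polynomial.map_mul, Polynomial.map_pow, map_X, map_C,
    Polynomial.map_one, algebraMap_int_eq, Int.coe_castRingHom]
  norm_num

/-- **`S₃`-fields with large class group (`G = D₃ = S₃`).**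
For every odd integer `n > 1` there are infinitely many pairwise non-isomorphic totally
imaginary Galois number fields `K` of degree `6` with Galois group `S₃`, each a splitting
field of an irreducible polynomial
`x⁶ + 3x⁵ + ((yⁿ-127)/36)x⁴ + ((yⁿ-217)/18)x³ + ((yⁿ-127)/36)x² + 3x + 1`
with `y` a positive integer, `y ≡ 19 (mod 36)`, `5 ∤ y` and `7 ∤ y`, such that
`rank_n Cl(K) ≥ 5`. -/
theorem S3_large_class_group (n : ℕ) (hn : 1 < n) (hodd : Odd n) :
    ∃ S : Set (IntermediateField ℚ ℂ), S.Infinite ∧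
      (∀ K ∈ S, ∀ K' ∈ S, K ≠ K' → IsEmpty (K ≃+* K')) ∧
      ∀ K ∈ S, ∃ y : ℕ, 0 < y ∧ y % 36 = 19 ∧ ¬ (5 ∣ y) ∧ ¬ (7 ∣ y) ∧
        (let P : Polynomial ℚ := X ^ 6 + C 3 * X ^ 5 + C (((y : ℚ) ^ n - 127) / 36) * X ^ 4 +
          C (((y : ℚ) ^ n - 217) / 18) * X ^ 3 + C (((y : ℚ) ^ n - 127) / 36) * X ^ 2 +
          C 3 * X + 1
         Irreducible P ∧ P.IsSplittingField ℚ K) ∧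
        NumberField K ∧ Module.finrank ℚ K = 6 ∧ IsGalois ℚ K ∧
        Nonempty ((K ≃ₐ[ℚ] K) ≃* Equiv.Perm (Fin 3)) ∧
        TotallyImaginary K ∧
        HasZModRankGE (ClassGroup (𝓞 K)) n 5 := by
  obtain ⟨M, hM0, hM, hl, hex⟩ := exists_modulus n hn hodd
  obtain ⟨f, hf, hfr⟩ := exists_seq_of_forall_finset_exists (GoodY M)
    (fun x y => ¬ IsSquare ((100 - (x : ℤ) ^ n) * (100 - (y : ℤ) ^ n)))
    (good_step n M hn hodd hM0 hM)
  have hne : ∀ i j, i ≠ j → ¬ IsSquare ((100 - (f i : ℤ) ^ n) * (100 - (f j : ℤ) ^ n)) := by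
    intro i j hij
    rcases lt_or_gt_of_ne hij with h | h
    · exact hfr _ _ h
    · rw [mul_comm]; exact hfr _ _ h
  choose A hAy hA7 hA2 hcop using fun k => (hf k).facts hn hodd
  have hroot : ∀ k, ∃ θ : ℂ, aeval θ (pz (A k)) = 0 := by
    intro k
    have hd : (pq (A k)).degree ≠ 0 := by
      rw [degree_eq_natDegree (pq_monic _).ne_zero, pq_natDegree]
      norm_num
    obtain ⟨θ, hθ⟩ := IsAlgClosed.exists_aeval_eq_zero ℂ (pq (A k)) hd
    exact ⟨θ, by rw [← aeval_pq]; exact hθ⟩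
  choose θ hθ using hroot
  let g : ∀ k, IntermediateField.adjoin ℚ {θ k} := fun k =>
    ⟨θ k, IntermediateField.mem_adjoin_simple_self ℚ (θ k)⟩
  have hg : ∀ k, aeval (g k) (pz (A k)) = 0 := fun k => gen_root (g k) (hθ k)
  have htop : ∀ k, IntermediateField.adjoin ℚ {g k} = ⊤ := fun k => gen_top (θ k)
  refine ⟨Set.range fun k => IntermediateField.adjoin ℚ {θ k}, ?_, ?_, ?_⟩
  · -- infinitude
    intro hfin
    have := hfin.to_subtype
    obtain ⟨⟨K, hK⟩, hinf⟩ := Finite.exists_infinite_fiber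
      (Set.rangeFactorization fun k => IntermediateField.adjoin ℚ {θ k})
    obtain ⟨k0, hk0⟩ := id hK
    have hmem : ∀ k : (Set.rangeFactorization fun k => IntermediateField.adjoin ℚ {θ k}) ⁻¹' {⟨K, hK⟩},
        IntermediateField.adjoin ℚ {θ k} = K := fun k => congrArg Subtype.val k.2
    have hs : ∀ k : (Set.rangeFactorization fun k => IntermediateField.adjoin ℚ {θ k}) ⁻¹' {⟨K, hK⟩},
        ∃ s : IntermediateField.adjoin ℚ {θ k0}, s ^ 2 = ((100 - (f k : ℤ) ^ n : ℤ) : _) := by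
      intro k
      have hk : IntermediateField.adjoin ℚ {θ k} = IntermediateField.adjoin ℚ {θ k0} :=
        (hmem k).trans hk0.symm
      have hθk : θ k ∈ IntermediateField.adjoin ℚ {θ k0} := by
        rw [← hk]; exact IntermediateField.mem_adjoin_simple_self ℚ _
      exact sqrt_mem (gen_root ⟨θ k, hθk⟩ (hθ k)) (hAy k)
    choose s hs using hs
    have hgal := field_galois (hA7 k0) (hA2 k0) (hg k0) (htop k0)
    have hfd : FiniteDimensional ℚ (IntermediateField.adjoin ℚ {θ k0}) :=
      Module.finite_of_finrank_pos (by
        rw [field_finrank (hA7 k0) (hA2 k0) (hg k0) (htop k0)]; norm_num)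
    obtain ⟨k, k', hkk, heq⟩ := Finite.exists_ne_map_eq_of_infinite
      (fun k => fun σ : (IntermediateField.adjoin ℚ {θ k0}) ≃ₐ[ℚ] (IntermediateField.adjoin ℚ {θ k0}) =>
        (σ (s k) = s k))
    refine hne k k' (fun h => hkk (Subtype.ext h)) ?_
    exact char_square (hs k) (hs k') fun σ => by
      have := congrFun heq σ
      simp only [eq_iff_iff] at this
      exact this
  · rintro K ⟨k, rfl⟩ K' ⟨k', rfl⟩ hKK
    refine ⟨fun σ => hKK ?_⟩
    exact le_antisymm (adjoin_le_of_hom (hθ k) _ σ.toRingHom)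
      (adjoin_le_of_hom (hθ k') _ σ.symm.toRingHom)
  · rintro K ⟨k, rfl⟩
    obtain ⟨h1, h2, h3⟩ := hf k
    obtain ⟨hNF, hrk⟩ := rank_five' _ (hA7 k) (hA2 k) (hg k) (htop k) (hAy k)
      (by have : f k ≠ 0 := by omega
          exact_mod_cast this) hn hodd hM (Int.natCast_dvd_natCast.mpr h3) (hcop k) hl hex
    refine ⟨f k, by omega, by omega, by omega, by omega, ?_, hNF, ?_, ?_, ?_, ?_, hrk⟩
    · rw [stmt_poly (hAy k)]
      exact ⟨pq_irreducible _ (hA7 k) (hA2 k), field_splitting (hg k) (htop k)⟩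
    · exact field_finrank (hA7 k) (hA2 k) (hg k) (htop k)
    · exact field_galois (hA7 k) (hA2 k) (hg k) (htop k)
    · exact field_S3 (hA7 k) (hA2 k) (hg k) (htop k)
    · exact fun φ => ⟨g k, field_imaginary (hA7 k) (hg k) φ⟩
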